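/- arXiv:2209.02027 — 2 statements merged into one kernel-verified Lean document; each statement's English description precedes it below -/
import Mathlib

section
/- For every integer N ≥ 1 and every θ = (θ₁,θ₂) ∈ ℝⁿ×ℝⁿ, the space H_{N,θ} of quasi-periodic distributions is a complex subspace of 𝒮'(ℝⁿ) of dimension N^n, and the family of Dirac combs {e^θ_j : j ∈ {0,1,…,N−1}ⁿ} is a basis of H_{N,θ}. -/
open BigOperators

/-- The standard symplectic form `σ((q,p),(q',p')) = ⟨p,q'⟩ − ⟨p',q⟩` on
`ℝ^{2n} = ℝⁿ × ℝⁿ`, a point `x` being written as a pair `x = (q,p)`. -/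
def sigmaR (n : ℕ) (x y : (Fin n → ℝ) × (Fin n → ℝ)) : ℝ :=
  (∑ i : Fin n, x.2 i * y.1 i) - ∑ i : Fin n, y.2 i * x.1 i

/-- `Q((q,p)) = ⟨q,p⟩`. -/
def QR (n : ℕ) (x : (Fin n → ℝ) × (Fin n → ℝ)) : ℝ :=
  ∑ i : Fin n, x.1 i * x.2 i

/-- The Schrödinger representation operator:
`(ρ_N(x,ζ)f)(y) = ζ^N e^{2πiN(⟨p,y⟩ − ⟨q,p⟩/2)} f(y−q)` for `x = (q,p)`. -/
noncomputable def rho (n N : ℕ) (x : (Fin n → ℝ) × (Fin n → ℝ)) (ζ : ℂ)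
    (f : (Fin n → ℝ) → ℂ) : (Fin n → ℝ) → ℂ :=
  fun y => ζ ^ N * Complex.exp (2 * Real.pi * Complex.I * (N : ℂ) *
      (((∑ i : Fin n, x.2 i * y i : ℝ) : ℂ) - ((QR n x : ℝ) : ℂ) / 2)) * f (y - x.1)

/-- Coercion of an integer lattice point `w ∈ ℤ^{2n}` into `ℝ^{2n}`. -/
def castVec (n : ℕ) (w : (Fin n → ℤ) × (Fin n → ℤ)) : (Fin n → ℝ) × (Fin n → ℝ) :=
  (fun i => (w.1 i : ℝ), fun i => (w.2 i : ℝ))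

/-- The pairing of the Dirac comb `e^θ_j` against a test function:
`e^θ_j(f) = N^{−n/2} Σ_{k∈ℤⁿ} e^{−2πi⟨θ₂,k⟩} f(k + (j−θ₁)/N)`. -/
noncomputable def comb (n N : ℕ) (θ : (Fin n → ℝ) × (Fin n → ℝ)) (j : Fin n → ℤ)
    (f : (Fin n → ℝ) → ℂ) : ℂ :=
  (((N : ℝ) ^ (-(n : ℝ) / 2) : ℝ) : ℂ) *
    ∑' k : Fin n → ℤ,
      Complex.exp (-(2 * Real.pi * Complex.I) *
          ((∑ i : Fin n, θ.2 i * (k i : ℝ) : ℝ) : ℂ)) *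
        f (fun i => (k i : ℝ) + ((j i : ℝ) - θ.1 i) / N)

/-- The transformed test function defining the dual action of `ρ_N(x,ζ)` on tempered
distributions by `(ρ_N(x,ζ)ν)(f) := ν(f̃)`, namely
`f̃(z) = ζ^N e^{2πiN(⟨p,z⟩ + ⟨q,p⟩/2)} f(z+q)` for `x = (q,p)`. -/
noncomputable def rhoDualTest (n N : ℕ) (x : (Fin n → ℝ) × (Fin n → ℝ)) (ζ : ℂ)
    (f : (Fin n → ℝ) → ℂ) : (Fin n → ℝ) → ℂ :=
  fun z => ζ ^ N * Complex.exp (2 * Real.pi * Complex.I * (N : ℂ) *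
      (((∑ i : Fin n, x.2 i * z i : ℝ) : ℂ) + ((QR n x : ℝ) : ℂ) / 2)) * f (z + x.1)

/-!
Let `h` be a Schwartz function whose Fourier transform is `1` at `0` and vanishes at all other
lattice points. Testing Poisson summation against a tempered distribution `ν` gives
`∑_k ν(h · f(· + k)) = ∑_b f̂(b) ν(e_b h)`, with `e_ξ = e^{2πi⟨ξ,·⟩}`. With the roles of `f` and `h`
exchanged the right-hand side is `ν f`. If `ν` is quasi-periodic, then the translates can be moved
from `h` to `f`, and a second application yields `ν f = ∑_b f̂(b + θ₂) ν(e_{b+θ₂} h)`.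
Quasi-periodicity under modulations makes `ν` depend only on the values at `b ∈ {0,…,N-1}ⁿ`, so
that the dimension is at most `N^n`. The Dirac combs have pairwise disjoint supports and are
therefore `N^n` independent elements.
-/

open SchwartzMap

section SchwartzSums

variable {α E F : Type*} [NormedAddCommGroup E] [NormedSpace ℝ E] [NormedAddCommGroup F]
  [NormedSpace ℝ F] [NormedSpace ℂ F] [SMulCommClass ℝ ℂ F]
  {g : α → 𝓢(E, F)} {f : 𝓢(E, F)}

lemma summable_norm_apply_of_summable_seminorm
    (hs : ∀ l m, Summable fun i ↦ SchwartzMap.seminorm ℂ l m (g i)) (x : E) :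
    Summable fun i ↦ ‖g i x‖ :=
  .of_nonneg_of_le (fun _ ↦ norm_nonneg _) (fun i ↦ norm_le_seminorm ℂ (g i) x) (hs 0 0)

variable [CompleteSpace F]

lemma hasSum_iteratedFDeriv_of_summable_seminorm
    (hs : ∀ m, Summable fun i ↦ SchwartzMap.seminorm ℂ 0 m (g i))
    (hf : ∀ x, HasSum (fun i ↦ g i x) (f x)) (m : ℕ) (x : E) :
    HasSum (fun i ↦ iteratedFDeriv ℝ m (g i) x) (iteratedFDeriv ℝ m f x) := by
  have hsum : Summable fun i ↦ iteratedFDeriv ℝ m (g i) x :=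
    .of_norm_bounded (hs m) fun i ↦ norm_iteratedFDeriv_le_seminorm ℂ (g i) m x
  have htsum := iteratedFDeriv_tsum_apply (𝕜 := ℝ) (N := ⊤) (f := fun i ↦ ⇑(g i))
    (fun i ↦ (g i).smooth ⊤) (fun k _ ↦ hs k)
    (fun k i x _ ↦ norm_iteratedFDeriv_le_seminorm ℂ (g i) k x) (k := m) le_top x
  rw [show (fun y ↦ ∑' i, g i y) = f from funext fun y ↦ (hf y).tsum_eq] at htsum
  exact htsum ▸ hsum.hasSum

lemma seminorm_le_tsum_seminorm
    (hs : ∀ l m, Summable fun i ↦ SchwartzMap.seminorm ℂ l m (g i))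
    (hf : ∀ x, HasSum (fun i ↦ g i x) (f x)) (l m : ℕ) :
    SchwartzMap.seminorm ℂ l m f ≤ ∑' i, SchwartzMap.seminorm ℂ l m (g i) := by
  refine seminorm_le_bound ℂ l m _ (tsum_nonneg fun _ ↦ apply_nonneg _ _) fun x ↦ ?_
  have hnorm : Summable fun i ↦ ‖iteratedFDeriv ℝ m (g i) x‖ :=
    .of_nonneg_of_le (fun _ ↦ norm_nonneg _)
      (fun i ↦ norm_iteratedFDeriv_le_seminorm ℂ (g i) m x) (hs 0 m)
  rw [← (hasSum_iteratedFDeriv_of_summable_seminorm (hs 0) hf m x).tsum_eq]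
  calc ‖x‖ ^ l * ‖∑' i, iteratedFDeriv ℝ m (g i) x‖
      ≤ ‖x‖ ^ l * ∑' i, ‖iteratedFDeriv ℝ m (g i) x‖ := by
        gcongr
        exact norm_tsum_le_tsum_norm hnorm
    _ = ∑' i, ‖x‖ ^ l * ‖iteratedFDeriv ℝ m (g i) x‖ := tsum_mul_left.symm
    _ ≤ ∑' i, SchwartzMap.seminorm ℂ l m (g i) :=
        (hnorm.mul_left _).tsum_le_tsum (fun i ↦ le_seminorm ℂ l m (g i) x) (hs l m)

lemma hasSum_of_summable_seminorm
    (hs : ∀ l m, Summable fun i ↦ SchwartzMap.seminorm ℂ l m (g i))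
    (hf : ∀ x, HasSum (fun i ↦ g i x) (f x)) : HasSum g f := by
  rw [HasSum, SummationFilter.unconditional_filter, (schwartz_withSeminorms ℂ E F).tendsto_nhds]
  rintro ⟨l, m⟩ ε hε
  have htail := tendsto_tsum_compl_atTop_zero fun i ↦ SchwartzMap.seminorm ℂ l m (g i)
  filter_upwards [htail.eventually_lt_const hε] with s hlt
  have hcompl (x : E) : HasSum (fun i : {i // i ∉ s} ↦ g i x) ((f - ∑ i ∈ s, g i) x) := by
    have := s.hasSum_iff_compl.1 (hf x)
    simpa using this
  rw [schwartzSeminormFamily_apply, map_sub_rev]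
  exact (seminorm_le_tsum_seminorm (fun l m ↦ (hs l m).subtype _) hcompl l m).trans_lt hlt

lemma tsum_map_eq_of_tsum_apply_eq {β : Type*} {g' : β → 𝓢(E, F)}
    (hg : ∀ l m, Summable fun i ↦ SchwartzMap.seminorm ℂ l m (g i))
    (hg' : ∀ l m, Summable fun i ↦ SchwartzMap.seminorm ℂ l m (g' i))
    (h : ∀ x, ∑' i, g i x = ∑' i, g' i x) (ν : 𝓢(E, F) →L[ℂ] ℂ) :
    ∑' i, ν (g i) = ∑' i, ν (g' i) := by
  have hd (l m : ℕ) : Summable fun i ↦ SchwartzMap.seminorm ℂ l m (Sum.elim g (-g') i) := by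
    refine (hg l m).sum _ ?_
    simpa only [Function.comp_def, Sum.elim_inr, Pi.neg_apply, map_neg_eq_map] using hg' l m
  have hzero (x : E) : HasSum (fun i ↦ Sum.elim g (-g') i x) ((0 : 𝓢(E, F)) x) := by
    have hadd := HasSum.sum (f := fun i ↦ Sum.elim g (-g') i x)
      (summable_norm_apply_of_summable_seminorm hg x).of_norm.hasSum
      (summable_norm_apply_of_summable_seminorm hg' x).of_norm.neg.hasSum
    rwa [tsum_neg, h, add_neg_cancel] at hadd
  have hν : HasSum (fun i ↦ ν (Sum.elim g (-g') i)) 0 := by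
    simpa using (hasSum_of_summable_seminorm hd hzero).mapL ν
  have hl : HasSum (fun i ↦ ν (g i)) (∑' i, ν (g i)) :=
    (hν.summable.comp_injective Sum.inl_injective).hasSum
  have hr : HasSum (fun i ↦ ν (-g' i)) (∑' i, ν (-g' i)) :=
    (hν.summable.comp_injective Sum.inr_injective).hasSum
  have hadd := HasSum.sum (f := fun i ↦ ν (Sum.elim g (-g') i)) hl hr
  simp only [map_neg, tsum_neg] at hadd
  exact add_neg_eq_zero.1 (hadd.unique hν)

end SchwartzSums

section Lattice

variable {ι : Type*}

/-- The inclusion of the lattice `ℤ^ι` in `ℝ^ι`. -/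
def latticeVec : (ι → ℤ) →+ (ι → ℝ) := (Int.castAddHom ℝ).compLeft ι

@[simp]
lemma latticeVec_apply (k : ι → ℤ) (i : ι) : latticeVec k i = k i := rfl

lemma latticeVec_injective : Function.Injective (latticeVec (ι := ι)) :=
  fun _ _ h ↦ funext fun i ↦ Int.cast_injective (congrFun h i)

lemma latticeVec_mem_span [Finite ι] (k : ι → ℤ) :
    latticeVec k ∈ Submodule.span ℤ (Set.range (Pi.basisFun ℝ ι)) :=
  ((Pi.basisFun ℝ ι).mem_span_iff_repr_mem ℤ _).2 fun i ↦ ⟨k i, by simp⟩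

lemma exists_fin_add_nsmul_eq {N : ℕ} [NeZero N] (b : ι → ℤ) :
    ∃ (r : ι → Fin N) (c : ι → ℤ), (fun i ↦ ((r i : ℕ) : ℤ)) + N • c = b := by
  have hdiv (i : ι) : ∃ (r : Fin N) (c : ℤ), ((r : ℕ) : ℤ) + N * c = b i := by
    have hN : (N : ℤ) ≠ 0 := Nat.cast_ne_zero.2 (NeZero.ne N)
    have hr := Int.emod_nonneg (b i) hN
    have hlt := Int.emod_lt_of_pos (b i) (by positivity : (0 : ℤ) < N)
    refine ⟨⟨(b i % N).toNat, by omega⟩, b i / N, ?_⟩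
    rw [Int.toNat_of_nonneg hr, Int.emod_add_mul_ediv]
  choose r c hrc using hdiv
  exact ⟨r, c, funext fun i ↦ by simpa using hrc i⟩

lemma eq_of_nsmul_add_fin_eq {N : ℕ} [NeZero N] {k : ι → ℤ} {l j : ι → Fin N}
    (h : N • k + (fun i ↦ ((l i : ℕ) : ℤ)) = fun i ↦ ((j i : ℕ) : ℤ)) : l = j ∧ k = 0 := by
  have hcoord (i : ι) : l i = j i ∧ k i = 0 := by
    have hi : N * k i + (l i : ℕ) = (j i : ℕ) := by simpa using congrFun h i
    have hzero : N * k i = 0 :=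
      Int.eq_zero_of_abs_lt_dvd (dvd_mul_right _ _) (abs_lt.2 (by omega))
    rw [hzero, zero_add, Nat.cast_inj] at hi
    exact ⟨Fin.ext hi, (mul_eq_zero.1 hzero).resolve_left (NeZero.ne _)⟩
  exact ⟨funext fun i ↦ (hcoord i).1, funext fun i ↦ (hcoord i).2⟩

variable [Fintype ι]

lemma one_le_norm_latticeVec {k : ι → ℤ} (hk : k ≠ 0) : 1 ≤ ‖latticeVec k‖ := by
  obtain ⟨i, hi⟩ := Function.ne_iff.1 hk
  calc (1 : ℝ) ≤ |(k i : ℝ)| := by exact_mod_cast Int.one_le_abs hi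
    _ ≤ ‖latticeVec k‖ := norm_le_pi_norm (latticeVec k) i

lemma inv_le_dist_latticeVec_add_of_ne {N : ℕ} [NeZero N] {u : ι → ℝ} {k : ι → ℤ}
    {l j : ι → Fin N} (h : ¬(l = j ∧ k = 0)) :
    (N : ℝ)⁻¹ ≤ dist (latticeVec k + (N : ℝ)⁻¹ • (latticeVec (fun i ↦ ((l i : ℕ) : ℤ)) - u))
      ((N : ℝ)⁻¹ • (latticeVec (fun i ↦ ((j i : ℕ) : ℤ)) - u)) := by
  have hN : (N : ℝ) ≠ 0 := NeZero.ne _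
  have hne : N • k + (fun i ↦ ((l i : ℕ) : ℤ)) - (fun i ↦ ((j i : ℕ) : ℤ)) ≠ 0 :=
    fun h₀ ↦ h (eq_of_nsmul_add_fin_eq (sub_eq_zero.1 h₀))
  have hdiff : latticeVec k + (N : ℝ)⁻¹ • (latticeVec (fun i ↦ ((l i : ℕ) : ℤ)) - u) -
      (N : ℝ)⁻¹ • (latticeVec (fun i ↦ ((j i : ℕ) : ℤ)) - u) = (N : ℝ)⁻¹ •
        latticeVec (N • k + (fun i ↦ ((l i : ℕ) : ℤ)) - (fun i ↦ ((j i : ℕ) : ℤ))) := by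
    rw [map_sub, map_add, map_nsmul, ← Nat.cast_smul_eq_nsmul ℝ, add_sub_assoc,
      ← smul_sub, add_sub_assoc, smul_add, inv_smul_smul₀ hN, sub_sub_sub_cancel_right]
  rw [dist_eq_norm, hdiff, norm_smul, norm_inv, Real.norm_natCast]
  exact le_mul_of_one_le_right (by positivity) (one_le_norm_latticeVec hne)

lemma summable_one_add_norm_latticeVec_pow_inv {r : ℕ} (hr : Fintype.card ι < r) :
    Summable fun k : ι → ℤ ↦ ((1 + ‖latticeVec k‖) ^ r)⁻¹ := by
  let L := Submodule.span ℤ (Set.range (Pi.basisFun ℝ ι))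
  have hL : Summable fun z : L ↦ ‖z‖⁻¹ ^ r :=
    ZLattice.summable_norm_pow_inv L r
      (by rwa [ZLattice.rank ℝ, Module.finrank_fintype_fun_eq_card])
  have hinj : Function.Injective fun k ↦ (⟨latticeVec k, latticeVec_mem_span k⟩ : L) :=
    fun _ _ h ↦ latticeVec_injective (congrArg Subtype.val h)
  have hspan : Summable fun k : ι → ℤ ↦ ‖latticeVec k‖⁻¹ ^ r := by
    simpa only [Function.comp_def, Submodule.coe_norm] using hL.comp_injective hinj
  refine .of_norm_bounded_eventually hspan ?_
  filter_upwards [Filter.eventually_cofinite_ne 0] with k hk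
  have hpos : 0 < ‖latticeVec k‖ := one_pos.trans_le (one_le_norm_latticeVec hk)
  rw [Real.norm_of_nonneg (by positivity), inv_pow]
  gcongr
  linarith

end Lattice

section PlaneWave

open Real Matrix
open scoped FourierTransform

variable {ι : Type*} [Fintype ι]

/-- The plane wave `x ↦ e^{2πi⟨ξ,x⟩}` of frequency `ξ`. -/
noncomputable def planeWave (ξ x : ι → ℝ) : ℂ := (𝐞 (ξ ⬝ᵥ x) : ℂ)

lemma planeWave_comm (ξ x : ι → ℝ) : planeWave ξ x = planeWave x ξ := by
  rw [planeWave, dotProduct_comm, planeWave]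

lemma planeWave_add_left (ξ η x : ι → ℝ) :
    planeWave (ξ + η) x = planeWave ξ x * planeWave η x := by
  simp only [planeWave, add_dotProduct, AddChar.map_add_eq_mul, Circle.coe_mul]

lemma planeWave_add_right (ξ x y : ι → ℝ) :
    planeWave ξ (x + y) = planeWave ξ x * planeWave ξ y := by
  simp only [planeWave_comm ξ, planeWave_add_left]

@[simp]
lemma planeWave_zero_left (x : ι → ℝ) : planeWave 0 x = 1 := by
  simp only [planeWave, zero_dotProduct, AddChar.map_zero_eq_one, Circle.coe_one]

@[simp]
lemma norm_planeWave (ξ x : ι → ℝ) : ‖planeWave ξ x‖ = 1 := Circle.norm_coe _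

lemma planeWave_nsmul_left (N : ℕ) (ξ x : ι → ℝ) : planeWave (N • ξ) x = planeWave ξ (N • x) := by
  rw [planeWave, planeWave, smul_dotProduct, dotProduct_smul]

lemma planeWave_eq_exp (ξ x : ι → ℝ) :
    planeWave ξ x = Complex.exp (2 * π * Complex.I * ((∑ i, ξ i * x i : ℝ) : ℂ)) := by
  rw [planeWave, fourierChar_apply, dotProduct]
  push_cast
  ring_nf

lemma planeWave_neg_mul_self (ξ x : ι → ℝ) : planeWave (-ξ) x * planeWave ξ x = 1 := by
  rw [← planeWave_add_left, neg_add_cancel, planeWave_zero_left]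

@[simp]
lemma planeWave_latticeVec (b k : ι → ℤ) : planeWave (latticeVec b) (latticeVec k) = 1 := by
  have hint : latticeVec b ⬝ᵥ latticeVec k = ((b ⬝ᵥ k : ℤ) : ℝ) := by
    simp [dotProduct]
  rw [planeWave, hint, fourierChar_apply, Complex.exp_eq_one_iff]
  exact ⟨b ⬝ᵥ k, by push_cast; ring⟩

lemma planeWave_latticeVec_nsmul_apply {N : ℕ} [NeZero N] (u : ι → ℝ)
    (b j k : ι → ℤ) :
    planeWave (latticeVec (N • b)) (latticeVec k + (N : ℝ)⁻¹ • (latticeVec j - u)) =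
      planeWave (-u) (latticeVec b) := by
  have hN : (N : ℝ) ≠ 0 := NeZero.ne _
  have hpoint : N • (latticeVec k + (N : ℝ)⁻¹ • (latticeVec j - u)) =
      latticeVec (N • k + j) + -u := by
    rw [smul_add, ← Nat.cast_smul_eq_nsmul ℝ N (_ • _), smul_inv_smul₀ hN, map_add, map_nsmul,
      sub_eq_add_neg, add_assoc]
  rw [map_nsmul, planeWave_nsmul_left, hpoint, planeWave_add_right, planeWave_latticeVec, one_mul,
    planeWave_comm]

lemma mFourier_coe_eq_planeWave (b : ι → ℤ) (x : ι → ℝ) :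
    UnitAddTorus.mFourier b (fun i ↦ (x i : UnitAddCircle)) = planeWave (latticeVec b) x := by
  simp only [UnitAddTorus.mFourier, ContinuousMap.coe_mk, fourier_coe_apply, planeWave,
    fourierChar_apply, ← Complex.exp_sum, dotProduct, latticeVec_apply]
  push_cast
  rw [Finset.mul_sum, Finset.sum_mul]
  congr! 2
  ring

/-- The linear form `x ↦ ⟨ξ,x⟩` as a continuous linear map. -/
noncomputable def dotProductCLM (ξ : ι → ℝ) : (ι → ℝ) →L[ℝ] ℝ :=
  (dotProductBilin ℝ ℝ ξ).toContinuousLinearMap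

lemma dotProductCLM_apply (ξ x : ι → ℝ) : dotProductCLM ξ x = ξ ⬝ᵥ x := rfl

lemma norm_dotProductCLM_le (ξ : ι → ℝ) : ‖dotProductCLM ξ‖ ≤ Fintype.card ι * ‖ξ‖ := by
  refine ContinuousLinearMap.opNorm_le_bound _ (by positivity) fun x ↦ ?_
  calc ‖dotProductCLM ξ x‖ ≤ ∑ j, ‖ξ j‖ * ‖x j‖ := by
        rw [dotProductCLM_apply, dotProduct]
        exact (norm_sum_le _ _).trans_eq (by simp only [norm_mul])
    _ ≤ ∑ _j : ι, ‖ξ‖ * ‖x‖ := by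
        gcongr <;> exact norm_le_pi_norm _ _
    _ = Fintype.card ι * ‖ξ‖ * ‖x‖ := by
        rw [Finset.sum_const, nsmul_eq_mul, Finset.card_univ, mul_assoc]

lemma iteratedDeriv_fourierChar (m : ℕ) :
    iteratedDeriv m (fun t : ℝ ↦ (𝐞 t : ℂ)) = fun t ↦ (2 * π * Complex.I) ^ m * 𝐞 t := by
  induction m with
  | zero => simp
  | succ m ih =>
    funext t
    rw [iteratedDeriv_succ, ih, deriv_const_mul_field, deriv_fourierChar, pow_succ,
      mul_assoc (_ ^ m)]

lemma contDiff_fourierChar {m : ℕ∞} : ContDiff ℝ m fun t : ℝ ↦ (𝐞 t : ℂ) := by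
  simp only [fourierChar_apply]
  have hphase : ContDiff ℝ m fun t : ℝ ↦ ((2 * π * t : ℝ) : ℂ) :=
    Complex.ofRealCLM.contDiff.comp (contDiff_const.mul contDiff_id)
  exact (hphase.mul contDiff_const).cexp

lemma planeWave_eq_comp (ξ : ι → ℝ) :
    planeWave ξ = (fun t : ℝ ↦ (𝐞 t : ℂ)) ∘ dotProductCLM ξ :=
  funext fun x ↦ by rw [planeWave, Function.comp_apply, dotProductCLM_apply]

lemma contDiff_planeWave {m : ℕ∞} (ξ : ι → ℝ) : ContDiff ℝ m (planeWave ξ) :=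
  planeWave_eq_comp ξ ▸ contDiff_fourierChar.comp (dotProductCLM ξ).contDiff

lemma norm_iteratedFDeriv_planeWave_le (ξ : ι → ℝ) (m : ℕ) (x : ι → ℝ) :
    ‖iteratedFDeriv ℝ m (planeWave ξ) x‖ ≤ (2 * π * (Fintype.card ι * ‖ξ‖)) ^ m := by
  rw [planeWave_eq_comp,
    (dotProductCLM ξ).iteratedFDeriv_comp_right contDiff_fourierChar x (i := m) le_rfl]
  calc _ ≤ ‖iteratedFDeriv ℝ m (fun t : ℝ ↦ (𝐞 t : ℂ)) (dotProductCLM ξ x)‖ *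
        ∏ _i : Fin m, ‖dotProductCLM ξ‖ :=
        ContinuousMultilinearMap.norm_compContinuousLinearMap_le _ _
    _ = (2 * π) ^ m * ‖dotProductCLM ξ‖ ^ m := by
        rw [norm_iteratedFDeriv_eq_norm_iteratedDeriv, iteratedDeriv_fourierChar]
        simp [abs_of_pos pi_pos, Circle.norm_coe]
    _ ≤ (2 * π * (Fintype.card ι * ‖ξ‖)) ^ m := by
        rw [mul_pow (2 * π)]
        gcongr
        exact norm_dotProductCLM_le ξ

lemma hasTemperateGrowth_planeWave (ξ : ι → ℝ) : (planeWave ξ).HasTemperateGrowth :=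
  ⟨contDiff_planeWave ξ, fun m ↦ ⟨0, (2 * π * (Fintype.card ι * ‖ξ‖)) ^ m, fun x ↦ by
    simpa using norm_iteratedFDeriv_planeWave_le ξ m x⟩⟩

end PlaneWave

section Operators

variable {ι : Type*} [Fintype ι]

/-- The translation `f ↦ f(· + a)` of Schwartz functions. -/
noncomputable def translationCLM (a : ι → ℝ) : 𝓢(ι → ℝ, ℂ) →L[ℂ] 𝓢(ι → ℝ, ℂ) :=
  compSubConstCLM ℂ (-a)

@[simp]
lemma translationCLM_apply (a : ι → ℝ) (f : 𝓢(ι → ℝ, ℂ)) (x : ι → ℝ) :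
    translationCLM a f x = f (x + a) := by
  simp [translationCLM]

lemma translationCLM_zero (f : 𝓢(ι → ℝ, ℂ)) : translationCLM 0 f = f := by
  ext x
  simp only [translationCLM_apply, add_zero]

/-- The modulation `f ↦ e^{2πi⟨ξ,·⟩} f` of Schwartz functions. -/
noncomputable def modulationCLM (ξ : ι → ℝ) : 𝓢(ι → ℝ, ℂ) →L[ℂ] 𝓢(ι → ℝ, ℂ) :=
  smulLeftCLM ℂ (planeWave ξ)

@[simp]
lemma modulationCLM_apply (ξ : ι → ℝ) (f : 𝓢(ι → ℝ, ℂ)) (x : ι → ℝ) :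
    modulationCLM ξ f x = planeWave ξ x * f x :=
  smulLeftCLM_apply_apply (hasTemperateGrowth_planeWave ξ) f x

lemma modulationCLM_zero (f : 𝓢(ι → ℝ, ℂ)) : modulationCLM 0 f = f := by
  ext x
  simp only [modulationCLM_apply, planeWave_zero_left, one_mul]

lemma modulationCLM_add (ξ η : ι → ℝ) (f : 𝓢(ι → ℝ, ℂ)) :
    modulationCLM (ξ + η) f = modulationCLM ξ (modulationCLM η f) := by
  ext x
  simp only [modulationCLM_apply, planeWave_add_left, mul_assoc]

lemma smulLeftCLM_coe_apply (h f : 𝓢(ι → ℝ, ℂ)) (x : ι → ℝ) :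
    smulLeftCLM ℂ h f x = h x * f x :=
  smulLeftCLM_apply_apply h.hasTemperateGrowth f x

end Operators

lemma exists_bump {E : Type*} [NormedAddCommGroup E] [NormedSpace ℝ E] [FiniteDimensional ℝ E]
    [HasContDiffBump E] (c : E) {r : ℝ} (hr : 0 < r) :
    ∃ f : 𝓢(E, ℂ), f c = 1 ∧ ∀ x, r ≤ dist x c → f x = 0 := by
  let b : ContDiffBump c := ⟨r / 2, r, half_pos hr, half_lt_self hr⟩
  have hsupp : HasCompactSupport fun x ↦ (b x : ℂ) :=
    b.hasCompactSupport.comp_left (g := ((↑) : ℝ → ℂ)) Complex.ofReal_zero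
  have hsmooth : ContDiff ℝ ((⊤ : ℕ∞) : WithTop ℕ∞) fun x ↦ (b x : ℂ) :=
    Complex.ofRealCLM.contDiff.comp b.contDiff
  refine ⟨hsupp.toSchwartzMap hsmooth, ?_, fun x hx ↦ ?_⟩
  · simp [b.one_of_mem_closedBall (Metric.mem_closedBall_self b.rIn_pos.le)]
  · simp [b.zero_of_le_dist hx]

section FourierTransform

open MeasureTheory
open scoped FourierTransform

variable {ι : Type*} [Fintype ι]

/-- The Fourier transform of Schwartz functions on `ℝ^ι`, carried over from Euclidean space
because Mathlib defines it on inner product spaces only. -/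
noncomputable def fourierPi (f : 𝓢(ι → ℝ, ℂ)) : 𝓢(ι → ℝ, ℂ) :=
  compCLMOfContinuousLinearEquiv ℂ (EuclideanSpace.equiv ι ℝ).symm
    (𝓕 (compCLMOfContinuousLinearEquiv ℂ (EuclideanSpace.equiv ι ℝ) f))

lemma fourierPi_apply (f : 𝓢(ι → ℝ, ℂ)) (ξ : ι → ℝ) :
    fourierPi f ξ = ∫ x, planeWave (-ξ) x * f x := by
  rw [fourierPi, compCLMOfContinuousLinearEquiv_apply, Function.comp_apply, fourier_coe,
    Real.fourier_eq, ← (PiLp.volume_preserving_toLp ι).integral_comp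
      (MeasurableEquiv.toLp 2 (ι → ℝ)).measurableEmbedding]
  refine integral_congr_ae (.of_forall fun x ↦ ?_)
  have hpull : compCLMOfContinuousLinearEquiv ℂ (EuclideanSpace.equiv ι ℝ) f
      (WithLp.toLp 2 x) = f x := rfl
  simp [planeWave, EuclideanSpace.inner_eq_star_dotProduct, Circle.smul_def, neg_dotProduct,
    -compCLMOfContinuousLinearEquiv_apply, hpull]

lemma fourierPi_surjective : Function.Surjective (fourierPi (ι := ι)) := by
  intro g
  refine ⟨compCLMOfContinuousLinearEquiv ℂ (EuclideanSpace.equiv ι ℝ).symm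
    (𝓕⁻ (compCLMOfContinuousLinearEquiv ℂ (EuclideanSpace.equiv ι ℝ) g)), ?_⟩
  have hcomp (u : 𝓢(EuclideanSpace ℝ ι, ℂ)) :
      compCLMOfContinuousLinearEquiv ℂ (EuclideanSpace.equiv ι ℝ)
        (compCLMOfContinuousLinearEquiv ℂ (EuclideanSpace.equiv ι ℝ).symm u) = u := by
    ext x
    simp
  rw [fourierPi, hcomp, FourierTransform.fourier_fourierInv_eq]
  ext x
  simp only [compCLMOfContinuousLinearEquiv_apply, Function.comp_apply,
    ContinuousLinearEquiv.apply_symm_apply]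

lemma fourierPi_modulationCLM (η : ι → ℝ) (f : 𝓢(ι → ℝ, ℂ)) (ξ : ι → ℝ) :
    fourierPi (modulationCLM η f) ξ = fourierPi f (ξ - η) := by
  simp only [fourierPi_apply, modulationCLM_apply, ← mul_assoc, ← planeWave_add_left]
  rw [neg_sub, sub_eq_neg_add]

variable (ι) in
lemma exists_fourierPi_latticeVec_eq_ite :
    ∃ h : 𝓢(ι → ℝ, ℂ), ∀ b : ι → ℤ, fourierPi h (latticeVec b) = if b = 0 then 1 else 0 := by
  obtain ⟨g, hg_one, hg_zero⟩ := exists_bump (0 : ι → ℝ) one_pos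
  obtain ⟨h, rfl⟩ := fourierPi_surjective g
  refine ⟨h, fun b ↦ ?_⟩
  split_ifs with hb
  · rw [hb, map_zero, hg_one]
  · exact hg_zero _ (by simpa only [dist_zero_right] using one_le_norm_latticeVec hb)

end FourierTransform

section Decay

variable {E F : Type*} [NormedAddCommGroup E] [NormedAddCommGroup F]

/-- Peetre's inequality. -/
lemma one_add_norm_le_mul (x a : E) : 1 + ‖a‖ ≤ (1 + ‖x‖) * (1 + ‖x + a‖) := by
  have htri : ‖a‖ ≤ ‖x‖ + ‖x + a‖ := by
    simpa [add_comm] using norm_sub_le (x + a) x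
  nlinarith [norm_nonneg x, norm_nonneg (x + a)]

variable [NormedSpace ℝ E] [NormedSpace ℝ F]

lemma exists_one_add_norm_pow_mul_iteratedFDeriv_le (f : 𝓢(E, F)) (r m : ℕ) :
    ∃ C, 0 ≤ C ∧ ∀ i ≤ m, ∀ x, (1 + ‖x‖) ^ r * ‖iteratedFDeriv ℝ i f x‖ ≤ C :=
  ⟨_, mul_nonneg (by positivity) (apply_nonneg _ _), fun _ hi x ↦
    one_add_le_sup_seminorm_apply (𝕜 := ℝ) (m := (r, m)) le_rfl hi f x⟩

lemma exists_norm_iteratedFDeriv_add_le (f : 𝓢(E, F)) (r m : ℕ) :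
    ∃ C, 0 ≤ C ∧ ∀ i ≤ m, ∀ x a,
      ‖iteratedFDeriv ℝ i f (x + a)‖ ≤ (1 + ‖x‖) ^ r * C * ((1 + ‖a‖) ^ r)⁻¹ := by
  obtain ⟨C, hC, hf⟩ := exists_one_add_norm_pow_mul_iteratedFDeriv_le f r m
  refine ⟨C, hC, fun i hi x a ↦ ?_⟩
  rw [← div_eq_mul_inv, le_div_iff₀ (by positivity)]
  calc ‖iteratedFDeriv ℝ i f (x + a)‖ * (1 + ‖a‖) ^ r
      ≤ ‖iteratedFDeriv ℝ i f (x + a)‖ * ((1 + ‖x‖) * (1 + ‖x + a‖)) ^ r := by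
        gcongr
        exact one_add_norm_le_mul x a
    _ = (1 + ‖x‖) ^ r * ((1 + ‖x + a‖) ^ r * ‖iteratedFDeriv ℝ i f (x + a)‖) := by
        rw [mul_pow]
        ring
    _ ≤ (1 + ‖x‖) ^ r * C := by
        gcongr
        exact hf i hi _

end Decay

section Poisson

open MeasureTheory

variable {ι : Type*}

/-- The periodization `x ↦ ∑_{k ∈ ℤ^ι} f(x + k)`. -/
noncomputable def periodization (f : (ι → ℝ) → ℂ) (x : ι → ℝ) : ℂ :=
  ∑' k, f (x + latticeVec k)

lemma periodization_add_latticeVec (f : (ι → ℝ) → ℂ) (x : ι → ℝ) (m : ι → ℤ) :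
    periodization f (x + latticeVec m) = periodization f x := by
  rw [periodization, periodization, ← (Equiv.addLeft m).tsum_eq fun k ↦ f (x + latticeVec k)]
  simp only [Equiv.coe_addLeft, map_add, add_assoc]

lemma exists_continuousMap_unitAddTorus_eq {Y : Type*} [TopologicalSpace Y]
    {u : (ι → ℝ) → Y} (hu : Continuous u) (hper : ∀ x m, u (x + latticeVec m) = u x) :
    ∃ U : C(UnitAddTorus ι, Y), ∀ x : ι → ℝ, U (fun i ↦ (x i : UnitAddCircle)) = u x := by
  let π : C(ι → ℝ, UnitAddTorus ι) := ⟨fun x i ↦ x i, by fun_prop⟩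
  have hπ : IsOpenQuotientMap π := .piMap fun _ ↦ QuotientAddGroup.isOpenQuotientMap_mk
  have hfactor : Function.FactorsThrough u π := by
    intro x y hxy
    have hdiff (i : ι) : ∃ m : ℤ, m • (1 : ℝ) = x i - y i := by
      rw [← AddCircle.coe_eq_zero_iff, AddCircle.coe_sub, sub_eq_zero]
      exact congrFun hxy i
    choose m hm using hdiff
    have hxm : x = y + latticeVec m := by
      ext i
      rw [Pi.add_apply, latticeVec_apply, ← zsmul_one, hm, add_sub_cancel]
    rw [hxm, hper]
  exact ⟨hπ.isQuotientMap.lift ⟨u, hu⟩ hfactor,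
    DFunLike.congr_fun (hπ.isQuotientMap.lift_comp ⟨u, hu⟩ hfactor)⟩

variable (ι) in
/-- The half-open unit cube `(0,1]^ι`, in the form used for integrals over `UnitAddTorus ι`. -/
def unitCube : Set (ι → ℝ) := {x | ∀ i, x i ∈ Set.Ioc (0 : ℝ) (0 + 1)}

lemma sub_latticeVec_mem_unitCube_iff {x : ι → ℝ} {k : ι → ℤ} :
    x - latticeVec k ∈ unitCube ι ↔ k = fun i ↦ ⌈x i⌉ - 1 := by
  rw [funext_iff]
  refine forall_congr' fun i ↦ ?_
  rw [eq_sub_iff_add_eq, eq_comm, Int.ceil_eq_iff]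
  push_cast [Pi.sub_apply, latticeVec_apply, Set.mem_Ioc]
  constructor <;> rintro ⟨hl, hr⟩ <;> constructor <;> linarith

lemma measurableSet_unitCube [Finite ι] : MeasurableSet (unitCube ι) :=
  .univ_pi' fun _ ↦ measurableSet_Ioc

variable [Fintype ι]

lemma exists_norm_apply_add_latticeVec_le (f : 𝓢(ι → ℝ, ℂ)) :
    ∃ C, 0 ≤ C ∧ ∀ x k, ‖f (x + latticeVec k)‖ ≤
      (1 + ‖x‖) ^ (Fintype.card ι + 1) * C *
        ((1 + ‖latticeVec k‖) ^ (Fintype.card ι + 1))⁻¹ := by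
  obtain ⟨C, hC, hf⟩ := exists_norm_iteratedFDeriv_add_le f (Fintype.card ι + 1) 0
  exact ⟨C, hC, fun x k ↦ by
    simpa only [norm_iteratedFDeriv_zero] using hf 0 le_rfl x (latticeVec k)⟩

lemma summable_apply_add_latticeVec (f : 𝓢(ι → ℝ, ℂ)) (x : ι → ℝ) :
    Summable fun k ↦ f (x + latticeVec k) := by
  obtain ⟨C, -, hf⟩ := exists_norm_apply_add_latticeVec_le f
  exact .of_norm_bounded
    ((summable_one_add_norm_latticeVec_pow_inv (Nat.lt_succ_self _)).mul_left _) (hf x)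

lemma continuous_periodization (f : 𝓢(ι → ℝ, ℂ)) : Continuous (periodization f) := by
  obtain ⟨C, hC, hf⟩ := exists_norm_apply_add_latticeVec_le f
  refine continuous_iff_continuousAt.2 fun x ↦ ?_
  refine ContinuousOn.continuousAt ?_ (Metric.ball_mem_nhds x one_pos)
  refine continuousOn_tsum (fun k ↦ by fun_prop) ((summable_one_add_norm_latticeVec_pow_inv
    (Nat.lt_succ_self _)).mul_left ((1 + (‖x‖ + 1)) ^ (Fintype.card ι + 1) * C)) fun k y hy ↦
    (hf y k).trans ?_
  gcongr
  exact (norm_lt_of_mem_ball hy).le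

lemma hasSum_setIntegral_unitCube {G : Type*} [NormedAddCommGroup G] [NormedSpace ℝ G]
    {g : (ι → ℝ) → G} (hg : Integrable g) :
    HasSum (fun k ↦ ∫ x in unitCube ι, g (x + latticeVec k)) (∫ x, g x) := by
  let cube (k : ι → ℤ) : Set (ι → ℝ) := (· - latticeVec k) ⁻¹' unitCube ι
  have hmem (k : ι → ℤ) (x : ι → ℝ) : x ∈ cube k ↔ k = fun i ↦ ⌈x i⌉ - 1 :=
    sub_latticeVec_mem_unitCube_iff
  have hdisj : Pairwise (Function.onFun Disjoint cube) := fun k l hkl ↦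
    Set.disjoint_left.2 fun x hk hl ↦ hkl (((hmem k x).1 hk).trans ((hmem l x).1 hl).symm)
  have hcover : ⋃ k, cube k = Set.univ :=
    Set.eq_univ_of_forall fun x ↦ Set.mem_iUnion.2 ⟨_, (hmem _ x).2 rfl⟩
  have htranslate (k : ι → ℤ) :
      ∫ x in cube k, g x = ∫ x in unitCube ι, g (x + latticeVec k) := by
    rw [← (measurePreserving_add_right volume (latticeVec k)).setIntegral_preimage_emb
      (MeasurableEquiv.addRight (latticeVec k)).measurableEmbedding g (cube k)]
    simp only [cube, Set.preimage_preimage, add_sub_cancel_right, Set.preimage_id']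
  have hsum := hasSum_integral_iUnion (s := cube)
    (fun k ↦ measurable_sub_const _ measurableSet_unitCube) hdisj hg.integrableOn
  simpa only [hcover, Measure.restrict_univ, htranslate] using hsum

lemma setIntegral_unitCube_periodization {g : (ι → ℝ) → ℂ} (hg : Integrable g) :
    ∫ x in unitCube ι, periodization g x = ∫ x, g x :=
  (hasSum_integral_of_summable_integral_norm
    (fun k ↦ (hg.comp_add_right (latticeVec k)).integrableOn)
    (hasSum_setIntegral_unitCube hg.norm).summable).unique (hasSum_setIntegral_unitCube hg)

lemma mFourierCoeff_eq_fourierPi {f : 𝓢(ι → ℝ, ℂ)} {U : C(UnitAddTorus ι, ℂ)}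
    (hU : ∀ x : ι → ℝ, U (fun i ↦ (x i : UnitAddCircle)) = periodization f x) (b : ι → ℤ) :
    UnitAddTorus.mFourierCoeff U b = fourierPi f (latticeVec b) := by
  have hint : Integrable fun x ↦ planeWave (-latticeVec b) x * f x :=
    f.integrable.bdd_mul (contDiff_planeWave (m := 0) _).continuous.aestronglyMeasurable
      (.of_forall fun x ↦ (norm_planeWave _ x).le)
  rw [UnitAddTorus.mFourierCoeff_eq_integral U b 0, fourierPi_apply,
    ← setIntegral_unitCube_periodization hint]
  refine integral_congr_ae (.of_forall fun x ↦ ?_)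
  have hone (k : ι → ℤ) : planeWave (-latticeVec b) (latticeVec k) = 1 := by
    rw [← map_neg, planeWave_latticeVec]
  simp only [mFourier_coe_eq_planeWave, hU, smul_eq_mul, periodization, ← tsum_mul_left,
    map_neg, planeWave_add_right, hone, mul_one]

lemma summable_norm_fourierPi_latticeVec (f : 𝓢(ι → ℝ, ℂ)) :
    Summable fun b ↦ ‖fourierPi f (latticeVec b)‖ := by
  simpa using (summable_apply_add_latticeVec (fourierPi f) 0).norm

/-- The Poisson summation formula. -/
lemma hasSum_fourierPi_mul_planeWave (f : 𝓢(ι → ℝ, ℂ)) (x : ι → ℝ) :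
    HasSum (fun b ↦ fourierPi f (latticeVec b) * planeWave (latticeVec b) x)
      (periodization f x) := by
  obtain ⟨U, hU⟩ := exists_continuousMap_unitAddTorus_eq (continuous_periodization f)
    (periodization_add_latticeVec f)
  have hcoeff : UnitAddTorus.mFourierCoeff U = fun b ↦ fourierPi f (latticeVec b) :=
    funext (mFourierCoeff_eq_fourierPi hU)
  have hseries := UnitAddTorus.hasSum_mFourier_series_apply_of_summable
    (hcoeff ▸ (summable_norm_fourierPi_latticeVec f).of_norm) fun i ↦ (x i : UnitAddCircle)
  simpa only [hcoeff, mFourier_coe_eq_planeWave, hU, smul_eq_mul] using hseries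

end Poisson

section SeminormBounds

open Real

lemma seminorm_smulLeftCLM_le {E F : Type*} [NormedAddCommGroup E] [NormedSpace ℝ E]
    [NormedAddCommGroup F] [NormedSpace ℝ F] [NormedSpace ℂ F] {u : E → ℂ}
    (hu : u.HasTemperateGrowth) (f : 𝓢(E, F)) {l m : ℕ} {C : ℝ}
    (hC : ∀ i ≤ m, ∀ j ≤ m, ∀ x,
      ‖x‖ ^ l * (‖iteratedFDeriv ℝ i u x‖ * ‖iteratedFDeriv ℝ j f x‖) ≤ C) :
    SchwartzMap.seminorm ℂ l m (smulLeftCLM F u f) ≤ 2 ^ m * C := by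
  have hC_nonneg : 0 ≤ C := le_trans (by positivity) (hC 0 m.zero_le 0 m.zero_le 0)
  refine seminorm_le_bound ℂ l m _ (by positivity) fun x ↦ ?_
  rw [show ⇑(smulLeftCLM F u f) = fun x ↦ u x • f x from
    funext fun x ↦ smulLeftCLM_apply_apply hu f x]
  calc ‖x‖ ^ l * ‖iteratedFDeriv ℝ m (fun x ↦ u x • f x) x‖
      ≤ ‖x‖ ^ l * ∑ i ∈ Finset.range (m + 1),
          m.choose i * ‖iteratedFDeriv ℝ i u x‖ * ‖iteratedFDeriv ℝ (m - i) f x‖ := by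
        gcongr
        exact norm_iteratedFDeriv_smul_le hu.1 (f.smooth ⊤) x (mod_cast le_top)
    _ = ∑ i ∈ Finset.range (m + 1), m.choose i *
          (‖x‖ ^ l * (‖iteratedFDeriv ℝ i u x‖ * ‖iteratedFDeriv ℝ (m - i) f x‖)) := by
        rw [Finset.mul_sum]
        exact Finset.sum_congr rfl fun i _ ↦ by ring
    _ ≤ ∑ i ∈ Finset.range (m + 1), m.choose i * C := by
        gcongr with i hi
        exact hC i (Finset.mem_range_succ_iff.1 hi) (m - i) (m.sub_le i) x
    _ = 2 ^ m * C := by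
        rw [← Finset.sum_mul, ← Nat.cast_sum, Nat.sum_range_choose, Nat.cast_pow, Nat.cast_ofNat]

variable {ι : Type*} [Fintype ι]

lemma exists_seminorm_smulLeftCLM_translationCLM_le (h f : 𝓢(ι → ℝ, ℂ)) (r l m : ℕ) :
    ∃ C, ∀ a, SchwartzMap.seminorm ℂ l m (smulLeftCLM ℂ h (translationCLM a f)) ≤
      C * ((1 + ‖a‖) ^ r)⁻¹ := by
  obtain ⟨A, hA, hf⟩ := exists_norm_iteratedFDeriv_add_le f r m
  obtain ⟨B, -, hh⟩ := exists_one_add_norm_pow_mul_iteratedFDeriv_le h (l + r) m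
  refine ⟨2 ^ m * (B * A), fun a ↦ ?_⟩
  rw [mul_assoc]
  refine seminorm_smulLeftCLM_le h.hasTemperateGrowth _ fun i hi j hj x ↦ ?_
  rw [show ⇑(translationCLM a f) = fun x ↦ f (x + a) from funext (translationCLM_apply a f),
    iteratedFDeriv_comp_add_right]
  calc ‖x‖ ^ l * (‖iteratedFDeriv ℝ i h x‖ * ‖iteratedFDeriv ℝ j f (x + a)‖)
      ≤ (1 + ‖x‖) ^ l * (‖iteratedFDeriv ℝ i h x‖ *
          ((1 + ‖x‖) ^ r * A * ((1 + ‖a‖) ^ r)⁻¹)) := by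
        gcongr
        · exact le_add_of_nonneg_left zero_le_one
        · exact hf j hj x a
    _ = (1 + ‖x‖) ^ (l + r) * ‖iteratedFDeriv ℝ i h x‖ * (A * ((1 + ‖a‖) ^ r)⁻¹) := by ring
    _ ≤ B * (A * ((1 + ‖a‖) ^ r)⁻¹) := by
        gcongr
        exact hh i hi x
    _ = B * A * ((1 + ‖a‖) ^ r)⁻¹ := (mul_assoc ..).symm

lemma norm_iteratedFDeriv_planeWave_le_one_add_pow (ξ : ι → ℝ) {i m : ℕ} (hi : i ≤ m)
    (x : ι → ℝ) : ‖iteratedFDeriv ℝ i (planeWave ξ) x‖ ≤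
      ((1 + 2 * π * Fintype.card ι) * (1 + ‖ξ‖)) ^ m := by
  have hpos : 0 ≤ 2 * π * Fintype.card ι := by positivity
  calc ‖iteratedFDeriv ℝ i (planeWave ξ) x‖ ≤ (2 * π * (Fintype.card ι * ‖ξ‖)) ^ i :=
        norm_iteratedFDeriv_planeWave_le ξ i x
    _ ≤ ((1 + 2 * π * Fintype.card ι) * (1 + ‖ξ‖)) ^ i := by
        refine pow_le_pow_left₀ (by positivity) ?_ i
        nlinarith [norm_nonneg ξ]
    _ ≤ ((1 + 2 * π * Fintype.card ι) * (1 + ‖ξ‖)) ^ m :=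
        pow_le_pow_right₀ (by nlinarith [norm_nonneg ξ]) hi

lemma exists_seminorm_modulationCLM_le (h : 𝓢(ι → ℝ, ℂ)) (l m : ℕ) :
    ∃ C, ∀ ξ, SchwartzMap.seminorm ℂ l m (modulationCLM ξ h) ≤ C * (1 + ‖ξ‖) ^ m := by
  obtain ⟨B, -, hh⟩ := exists_one_add_norm_pow_mul_iteratedFDeriv_le h l m
  refine ⟨2 ^ m * ((1 + 2 * π * Fintype.card ι) ^ m * B), fun ξ ↦ ?_⟩
  rw [mul_assoc]
  refine seminorm_smulLeftCLM_le (hasTemperateGrowth_planeWave ξ) h fun i hi j hj x ↦ ?_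
  calc ‖x‖ ^ l * (‖iteratedFDeriv ℝ i (planeWave ξ) x‖ * ‖iteratedFDeriv ℝ j h x‖)
      ≤ (1 + ‖x‖) ^ l * (((1 + 2 * π * Fintype.card ι) * (1 + ‖ξ‖)) ^ m *
          ‖iteratedFDeriv ℝ j h x‖) := by
        gcongr
        · exact le_add_of_nonneg_left zero_le_one
        · exact norm_iteratedFDeriv_planeWave_le_one_add_pow ξ hi x
    _ = ((1 + 2 * π * Fintype.card ι) * (1 + ‖ξ‖)) ^ m *
          ((1 + ‖x‖) ^ l * ‖iteratedFDeriv ℝ j h x‖) := by ring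
    _ ≤ ((1 + 2 * π * Fintype.card ι) * (1 + ‖ξ‖)) ^ m * B := by
        gcongr
        exact hh j hj x
    _ = (1 + 2 * π * Fintype.card ι) ^ m * B * (1 + ‖ξ‖) ^ m := by
        rw [mul_pow, mul_right_comm]

lemma summable_seminorm_smulLeftCLM_translationCLM (h f : 𝓢(ι → ℝ, ℂ)) (l m : ℕ) :
    Summable fun k ↦
      SchwartzMap.seminorm ℂ l m (smulLeftCLM ℂ h (translationCLM (latticeVec k) f)) := by
  obtain ⟨C, hC⟩ := exists_seminorm_smulLeftCLM_translationCLM_le h f (Fintype.card ι + 1) l m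
  exact .of_nonneg_of_le (fun _ ↦ apply_nonneg _ _) (fun k ↦ hC (latticeVec k))
    ((summable_one_add_norm_latticeVec_pow_inv (Nat.lt_succ_self _)).mul_left C)

lemma summable_seminorm_fourierPi_smul_modulationCLM (h f : 𝓢(ι → ℝ, ℂ)) (l m : ℕ) :
    Summable fun b ↦ SchwartzMap.seminorm ℂ l m
      (fourierPi f (latticeVec b) • modulationCLM (latticeVec b) h) := by
  obtain ⟨C, hC⟩ := exists_seminorm_modulationCLM_le h l m
  obtain ⟨B, -, hB⟩ :=
    exists_one_add_norm_pow_mul_iteratedFDeriv_le (fourierPi f) (Fintype.card ι + 1 + m) 0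
  refine .of_nonneg_of_le (fun _ ↦ apply_nonneg _ _) (fun b ↦ ?_)
    ((summable_one_add_norm_latticeVec_pow_inv (Nat.lt_succ_self _)).mul_left (C * B))
  have hC_nonneg : 0 ≤ C :=
    nonneg_of_mul_nonneg_left ((apply_nonneg _ _).trans (hC (latticeVec b))) (by positivity)
  rw [map_smul_eq_mul, ← div_eq_mul_inv, le_div_iff₀ (by positivity)]
  calc ‖fourierPi f (latticeVec b)‖ * SchwartzMap.seminorm ℂ l m (modulationCLM (latticeVec b) h) *
        (1 + ‖latticeVec b‖) ^ (Fintype.card ι + 1)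
      ≤ ‖fourierPi f (latticeVec b)‖ * (C * (1 + ‖latticeVec b‖) ^ m) *
          (1 + ‖latticeVec b‖) ^ (Fintype.card ι + 1) := by
        gcongr
        exact hC _
    _ = C * ((1 + ‖latticeVec b‖) ^ (Fintype.card ι + 1 + m) *
          ‖fourierPi f (latticeVec b)‖) := by ring
    _ ≤ C * B := by
        gcongr
        simpa only [norm_iteratedFDeriv_zero] using hB 0 le_rfl (latticeVec b)

end SeminormBounds

section QuasiPeriodic

variable {ι : Type*} [Fintype ι]

lemma tsum_map_smulLeftCLM_translationCLM (ν : 𝓢(ι → ℝ, ℂ) →L[ℂ] ℂ) (h f : 𝓢(ι → ℝ, ℂ)) :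
    ∑' k, ν (smulLeftCLM ℂ h (translationCLM (latticeVec k) f)) =
      ∑' b, fourierPi f (latticeVec b) * ν (modulationCLM (latticeVec b) h) := by
  have hpointwise (x : ι → ℝ) : ∑' k, smulLeftCLM ℂ h (translationCLM (latticeVec k) f) x =
      ∑' b, (fourierPi f (latticeVec b) • modulationCLM (latticeVec b) h) x := by
    calc ∑' k, smulLeftCLM ℂ h (translationCLM (latticeVec k) f) x
        = h x * periodization f x := by
          simp only [smulLeftCLM_coe_apply, translationCLM_apply, tsum_mul_left, periodization]
      _ = ∑' b, (fourierPi f (latticeVec b) * planeWave (latticeVec b) x) * h x := by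
          rw [tsum_mul_right, (hasSum_fourierPi_mul_planeWave f x).tsum_eq, mul_comm]
      _ = ∑' b, (fourierPi f (latticeVec b) • modulationCLM (latticeVec b) h) x := by
          simp only [smul_apply, modulationCLM_apply, smul_eq_mul, mul_assoc]
  have hsum := tsum_map_eq_of_tsum_apply_eq (summable_seminorm_smulLeftCLM_translationCLM h f)
    (summable_seminorm_fourierPi_smul_modulationCLM h f) hpointwise ν
  simpa only [map_smul ν, smul_eq_mul] using hsum

lemma translationCLM_smulLeftCLM_translationCLM_neg (a t : ι → ℝ) (f h : 𝓢(ι → ℝ, ℂ)) :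
    smulLeftCLM ℂ (modulationCLM t h) (translationCLM a (modulationCLM (-t) f)) =
      planeWave (-t) a • translationCLM a (smulLeftCLM ℂ f (translationCLM (-a) h)) := by
  ext x
  simp only [smulLeftCLM_coe_apply, translationCLM_apply, modulationCLM_apply, smul_apply,
    smul_eq_mul, planeWave_add_right, add_neg_cancel_right]
  linear_combination planeWave (-t) a * f (x + a) * h x * planeWave_neg_mul_self t x

lemma map_eq_tsum_fourierPi_mul {ν : 𝓢(ι → ℝ, ℂ) →L[ℂ] ℂ} {t : ι → ℝ}
    (hν : ∀ a f, ν (translationCLM (latticeVec a) f) = planeWave t (latticeVec a) * ν f)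
    {h : 𝓢(ι → ℝ, ℂ)} (hh : ∀ b, fourierPi h (latticeVec b) = if b = 0 then 1 else 0)
    (f : 𝓢(ι → ℝ, ℂ)) :
    ν f = ∑' b, fourierPi f (latticeVec b + t) * ν (modulationCLM (latticeVec b + t) h) := by
  have hmove (k : ι → ℤ) : ν (smulLeftCLM ℂ f (translationCLM (latticeVec (-k)) h)) =
      ν (smulLeftCLM ℂ (modulationCLM t h)
        (translationCLM (latticeVec k) (modulationCLM (-t) f))) := by
    rw [translationCLM_smulLeftCLM_translationCLM_neg, map_smul, hν, smul_eq_mul, ← mul_assoc,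
      planeWave_neg_mul_self, one_mul, map_neg]
  calc ν f = ∑' b, fourierPi h (latticeVec b) * ν (modulationCLM (latticeVec b) f) := by
        rw [tsum_eq_single 0 fun b hb ↦ by rw [hh, if_neg hb, zero_mul], hh, if_pos rfl, one_mul,
          map_zero, modulationCLM_zero]
    _ = ∑' k, ν (smulLeftCLM ℂ f (translationCLM (latticeVec k) h)) :=
        (tsum_map_smulLeftCLM_translationCLM ν f h).symm
    _ = ∑' k, ν (smulLeftCLM ℂ (modulationCLM t h)
          (translationCLM (latticeVec k) (modulationCLM (-t) f))) := by
        rw [← (Equiv.neg _).tsum_eq]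
        exact tsum_congr hmove
    _ = ∑' b, fourierPi (modulationCLM (-t) f) (latticeVec b) *
          ν (modulationCLM (latticeVec b) (modulationCLM t h)) :=
        tsum_map_smulLeftCLM_translationCLM ν _ _
    _ = ∑' b, fourierPi f (latticeVec b + t) * ν (modulationCLM (latticeVec b + t) h) := by
        simp only [fourierPi_modulationCLM, sub_neg_eq_add, modulationCLM_add]

/-- The space `H_{N,θ}` of quasi-periodic distributions. A lattice point `w = (a, b)` acts on test
functions by a modulation and a translation alone: the phases of `ρ_N(w, e^{πiQ(w)})` combine to
`e^{2πiNQ(w)} = 1`. -/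
noncomputable def quasiPeriodicSpace (N : ℕ) (θ : (ι → ℝ) × (ι → ℝ)) :
    Submodule ℂ (𝓢(ι → ℝ, ℂ) →L[ℂ] ℂ) where
  carrier := {ν | ∀ (a b : ι → ℤ) (f : 𝓢(ι → ℝ, ℂ)),
    ν (modulationCLM (latticeVec (N • b)) (translationCLM (latticeVec a) f)) =
      planeWave θ.2 (latticeVec a) * planeWave (-θ.1) (latticeVec b) * ν f}
  add_mem' hμ hν a b f := by simp only [add_apply, hμ a b f, hν a b f, mul_add]
  zero_mem' a b f := by simp only [zero_apply, mul_zero]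
  smul_mem' c ν hν a b f := by simp only [smul_apply, hν a b f, smul_eq_mul, mul_left_comm]

variable {N : ℕ} {θ : (ι → ℝ) × (ι → ℝ)} {ν : 𝓢(ι → ℝ, ℂ) →L[ℂ] ℂ}

lemma mem_quasiPeriodicSpace : ν ∈ quasiPeriodicSpace N θ ↔
    ∀ (a b : ι → ℤ) (f : 𝓢(ι → ℝ, ℂ)),
      ν (modulationCLM (latticeVec (N • b)) (translationCLM (latticeVec a) f)) =
        planeWave θ.2 (latticeVec a) * planeWave (-θ.1) (latticeVec b) * ν f :=
  Iff.rfl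

lemma map_translationCLM_of_mem_quasiPeriodicSpace (hν : ν ∈ quasiPeriodicSpace N θ)
    (a : ι → ℤ) (f : 𝓢(ι → ℝ, ℂ)) :
    ν (translationCLM (latticeVec a) f) = planeWave θ.2 (latticeVec a) * ν f := by
  simpa [planeWave_comm (-θ.1), modulationCLM_zero] using hν a 0 f

lemma map_modulationCLM_of_mem_quasiPeriodicSpace (hν : ν ∈ quasiPeriodicSpace N θ)
    (b : ι → ℤ) (f : 𝓢(ι → ℝ, ℂ)) :
    ν (modulationCLM (latticeVec (N • b)) f) = planeWave (-θ.1) (latticeVec b) * ν f := by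
  simpa [planeWave_comm θ.2, translationCLM_zero] using hν 0 b f

lemma eq_zero_of_mem_quasiPeriodicSpace [NeZero N] (hν : ν ∈ quasiPeriodicSpace N θ)
    {h : 𝓢(ι → ℝ, ℂ)} (hh : ∀ b, fourierPi h (latticeVec b) = if b = 0 then 1 else 0)
    (hzero : ∀ r : ι → Fin N,
      ν (modulationCLM (latticeVec (fun i ↦ ((r i : ℕ) : ℤ)) + θ.2) h) = 0) : ν = 0 := by
  have hcoeff (b : ι → ℤ) : ν (modulationCLM (latticeVec b + θ.2) h) = 0 := by
    obtain ⟨r, c, rfl⟩ := exists_fin_add_nsmul_eq (N := N) b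
    rw [map_add, add_comm (latticeVec _), add_assoc, modulationCLM_add,
      map_modulationCLM_of_mem_quasiPeriodicSpace hν, hzero, mul_zero]
  ext f
  rw [map_eq_tsum_fourierPi_mul (map_translationCLM_of_mem_quasiPeriodicSpace hν) hh]
  simp only [hcoeff, mul_zero, tsum_zero, zero_apply]

/-- The evaluations `ν ↦ ν(e_{r+ξ} h)` at the modulations of a fixed Schwartz function `h` by the
frequencies `r + ξ`, `r ∈ {0,…,N-1}^ι`. -/
noncomputable def modulationEvals (N : ℕ) (ξ : ι → ℝ) (h : 𝓢(ι → ℝ, ℂ)) :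
    (𝓢(ι → ℝ, ℂ) →L[ℂ] ℂ) →ₗ[ℂ] (ι → Fin N) → ℂ :=
  .pi fun r ↦ (LinearMap.applyₗ (modulationCLM (latticeVec (fun i ↦ ((r i : ℕ) : ℤ)) + ξ) h)).comp
    (ContinuousLinearMap.coeLM ℂ)

variable (N θ) in
lemma exists_disjoint_quasiPeriodicSpace_ker [NeZero N] :
    ∃ Φ : (𝓢(ι → ℝ, ℂ) →L[ℂ] ℂ) →ₗ[ℂ] (ι → Fin N) → ℂ,
      Disjoint (quasiPeriodicSpace N θ) (LinearMap.ker Φ) := by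
  obtain ⟨h, hh⟩ := exists_fourierPi_latticeVec_eq_ite ι
  exact ⟨modulationEvals N θ.2 h, Submodule.disjoint_def.2 fun ν hν hker ↦
    eq_zero_of_mem_quasiPeriodicSpace hν hh (congrFun (LinearMap.mem_ker.1 hker))⟩

end QuasiPeriodic

section LinearAlgebra

open Module

lemma finrank_eq_card_and_span_range_eq {K V κ : Type*} [Field K] [AddCommGroup V] [Module K V]
    [Fintype κ] {S : Submodule K V} {e : κ → V} (he : LinearIndependent K e) (hmem : ∀ j, e j ∈ S)
    {Φ : V →ₗ[K] κ → K} (hΦ : Disjoint S (LinearMap.ker Φ)) :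
    finrank K S = Fintype.card κ ∧ Submodule.span K (Set.range e) = S := by
  have hinj : Function.Injective (Φ.domRestrict S) :=
    LinearMap.injective_domRestrict_iff.2 hΦ
  have : Module.Finite K S := .of_injective _ hinj
  have hle : finrank K S ≤ Fintype.card κ :=
    (LinearMap.finrank_le_finrank_of_injective hinj).trans_eq (finrank_fintype_fun_eq_card K)
  have hspan : Submodule.span K (Set.range e) = S :=
    Submodule.eq_of_le_of_finrank_le (Submodule.span_le.2 (Set.range_subset_iff.2 hmem))
      (hle.trans_eq (finrank_span_eq_card he).symm)
  exact ⟨hspan ▸ finrank_span_eq_card he, hspan⟩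

end LinearAlgebra

section DiracComb

variable {n N : ℕ}

lemma rhoDualTest_castVec (w : (Fin n → ℤ) × (Fin n → ℤ)) (f : (Fin n → ℝ) → ℂ)
    (z : Fin n → ℝ) :
    rhoDualTest n N (castVec n w)
        (Complex.exp (Real.pi * Complex.I * ((QR n (castVec n w) : ℝ) : ℂ))) f z =
      planeWave (latticeVec (N • w.2)) z * f (z + latticeVec w.1) := by
  have hshift : (castVec n w).1 = latticeVec w.1 := rfl
  rw [rhoDualTest, hshift, planeWave_eq_exp, ← Complex.exp_nat_mul, ← Complex.exp_add]
  congr 1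
  refine Complex.exp_eq_exp_iff_exists_int.2 ⟨N * ∑ i, w.1 i * w.2 i, ?_⟩
  simp only [QR, castVec, latticeVec_apply, Pi.smul_apply]
  simp only [nsmul_eq_mul, Int.cast_mul, Int.cast_natCast, mul_assoc, ← Finset.mul_sum]
  push_cast
  ring

lemma exp_sigmaR_castVec (θ : (Fin n → ℝ) × (Fin n → ℝ)) (w : (Fin n → ℤ) × (Fin n → ℤ)) :
    Complex.exp (2 * Real.pi * Complex.I * ((sigmaR n θ (castVec n w) : ℝ) : ℂ)) =
      planeWave θ.2 (latticeVec w.1) * planeWave (-θ.1) (latticeVec w.2) := by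
  rw [planeWave_eq_exp, planeWave_eq_exp, ← Complex.exp_add, ← mul_add, ← Complex.ofReal_add]
  simp only [sigmaR, castVec, latticeVec_apply, Pi.neg_apply, neg_mul, Finset.sum_neg_distrib,
    sub_eq_add_neg, mul_comm]

lemma comb_eq_tsum_planeWave (θ : (Fin n → ℝ) × (Fin n → ℝ)) (j : Fin n → ℤ)
    (f : (Fin n → ℝ) → ℂ) :
    comb n N θ j f = (((N : ℝ) ^ (-(n : ℝ) / 2) : ℝ) : ℂ) *
      ∑' k, planeWave (-θ.2) (latticeVec k) *
        f (latticeVec k + (N : ℝ)⁻¹ • (latticeVec j - θ.1)) := by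
  rw [comb]
  refine congrArg _ (tsum_congr fun k ↦ ?_)
  rw [planeWave_eq_exp]
  congr 2
  · simp
  · ext i
    simp [div_eq_inv_mul]

variable [NeZero N]

lemma comb_planeWave_mul_add_latticeVec (θ : (Fin n → ℝ) × (Fin n → ℝ)) (j a b : Fin n → ℤ)
    (f : (Fin n → ℝ) → ℂ) :
    comb n N θ j (fun z ↦ planeWave (latticeVec (N • b)) z * f (z + latticeVec a)) =
      planeWave θ.2 (latticeVec a) * planeWave (-θ.1) (latticeVec b) * comb n N θ j f := by
  have hcancel : planeWave θ.2 (latticeVec a) * planeWave (-θ.2) (latticeVec a) = 1 := by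
    rw [mul_comm, planeWave_neg_mul_self]
  rw [comb_eq_tsum_planeWave, comb_eq_tsum_planeWave, mul_left_comm]
  congr 1
  conv_rhs => rw [← tsum_mul_left, ← (Equiv.addRight a).tsum_eq]
  refine tsum_congr fun k ↦ ?_
  rw [planeWave_latticeVec_nsmul_apply, Equiv.coe_addRight, map_add, planeWave_add_right,
    add_right_comm]
  linear_combination (-(planeWave (-θ.2) (latticeVec k) * planeWave (-θ.1) (latticeVec b) *
    f (latticeVec k + latticeVec a + (N : ℝ)⁻¹ • (latticeVec j - θ.1)))) * hcancel

lemma comb_mem_quasiPeriodicSpace {θ : (Fin n → ℝ) × (Fin n → ℝ)} {j : Fin n → ℤ}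
    {ν : 𝓢(Fin n → ℝ, ℂ) →L[ℂ] ℂ} (hν : ∀ f, ν f = comb n N θ j f) :
    ν ∈ quasiPeriodicSpace N θ := by
  intro a b f
  rw [hν, hν, ← comb_planeWave_mul_add_latticeVec]
  congr 1
  ext z
  simp only [modulationCLM_apply, translationCLM_apply]

lemma exists_comb_eq_ite (θ : (Fin n → ℝ) × (Fin n → ℝ)) (j : Fin n → Fin N) :
    ∃ f : 𝓢(Fin n → ℝ, ℂ), ∀ l : Fin n → Fin N,
      comb n N θ (fun i ↦ ((l i : ℕ) : ℤ)) f = if l = j then 1 else 0 := by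
  have hN : (0 : ℝ) < N := Nat.cast_pos.2 (NeZero.pos N)
  have hscale : (((N : ℝ) ^ (-(n : ℝ) / 2) : ℝ) : ℂ) ≠ 0 :=
    Complex.ofReal_ne_zero.2 (Real.rpow_pos_of_pos hN _).ne'
  obtain ⟨f, hf_one, hf_zero⟩ :=
    exists_bump ((N : ℝ)⁻¹ • (latticeVec (fun i ↦ ((j i : ℕ) : ℤ)) - θ.1)) (inv_pos.2 hN)
  refine ⟨(((N : ℝ) ^ (-(n : ℝ) / 2) : ℝ) : ℂ)⁻¹ • f, fun l ↦ ?_⟩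
  simp only [comb_eq_tsum_planeWave, smul_apply, smul_eq_mul, mul_left_comm _ (_⁻¹), tsum_mul_left]
  rw [inv_mul_cancel_left₀ hscale, tsum_eq_single 0 fun k hk ↦ by
    rw [hf_zero _ (inv_le_dist_latticeVec_add_of_ne fun h ↦ hk h.2), mul_zero]]
  split_ifs with hl
  · rw [hl, map_zero, zero_add, hf_one, planeWave_comm, planeWave_zero_left, mul_one]
  · rw [hf_zero _ (inv_le_dist_latticeVec_add_of_ne fun h ↦ hl h.1), mul_zero]

lemma linearIndependent_comb {θ : (Fin n → ℝ) × (Fin n → ℝ)}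
    {E : (Fin n → ℤ) → 𝓢(Fin n → ℝ, ℂ) →L[ℂ] ℂ} (hE : ∀ j f, E j f = comb n N θ j f) :
    LinearIndependent ℂ fun j : Fin n → Fin N ↦ E fun i ↦ ((j i : ℕ) : ℤ) := by
  choose f hf using exists_comb_eq_ite (N := N) θ
  refine LinearIndependent.of_pairwise_dual_eq_zero_one _
    (fun j ↦ (LinearMap.applyₗ (f j)).comp (ContinuousLinearMap.coeLM ℂ))
    (fun j l hjl ↦ ?_) fun j ↦ ?_
  · simp [hE, hf, hjl.symm]
  · simp [hE, hf]

end DiracComb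

/-- the space `H_{N,θ}` of quasi-periodic tempered distributions is a complex
subspace of `𝒮'(ℝⁿ)` of dimension `N^n`, with basis the Dirac combs `e^θ_j`,
`j ∈ {0,…,N−1}ⁿ`.  The dual action of the Schrödinger representation is encoded by the
(unique, existing) continuous linear maps `rhoT x ζ : 𝒮(ℝⁿ) → 𝒮(ℝⁿ)`,
`(rhoT x ζ f)(z) = ζ^N e^{2πiN(⟨p,z⟩+⟨q,p⟩/2)} f(z+q)`, and the Dirac combs by the (unique,
existing) tempered distributions `Ecomb j` with `Ecomb j (f) = N^{−n/2} Σ_k e^{−2πi⟨θ₂,k⟩}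
f(k+(j−θ₁)/N)`. -/
theorem quasiPeriodic_dimension (n N : ℕ) (hN : 1 ≤ N) (θ : (Fin n → ℝ) × (Fin n → ℝ))
    (rhoT : (Fin n → ℝ) × (Fin n → ℝ) → ℂ →
      (SchwartzMap ((Fin n) → ℝ) ℂ →L[ℂ] SchwartzMap ((Fin n) → ℝ) ℂ))
    (hrhoT : ∀ x ζ f z, rhoT x ζ f z = rhoDualTest n N x ζ (⇑f) z)
    (Ecomb : (Fin n → ℤ) → (SchwartzMap ((Fin n) → ℝ) ℂ →L[ℂ] ℂ))
    (hEcomb : ∀ j f, Ecomb j f = comb n N θ j (⇑f)) :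
    ∃ S : Submodule ℂ (SchwartzMap ((Fin n) → ℝ) ℂ →L[ℂ] ℂ),
      (S : Set (SchwartzMap ((Fin n) → ℝ) ℂ →L[ℂ] ℂ))
        = {ν | ∀ w : (Fin n → ℤ) × (Fin n → ℤ), ∀ f,
            ν (rhoT (castVec n w)
                (Complex.exp (Real.pi * Complex.I * ((QR n (castVec n w) : ℝ) : ℂ))) f)
              = Complex.exp (2 * Real.pi * Complex.I *
                  ((sigmaR n θ (castVec n w) : ℝ) : ℂ)) * ν f} ∧
      Module.finrank ℂ S = N ^ n ∧
      (∀ j : Fin n → Fin N, Ecomb (fun i => ((j i : ℕ) : ℤ)) ∈ S) ∧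
      LinearIndependent ℂ (fun j : Fin n → Fin N => Ecomb (fun i => ((j i : ℕ) : ℤ))) ∧
      Submodule.span ℂ
          (Set.range (fun j : Fin n → Fin N => Ecomb (fun i => ((j i : ℕ) : ℤ)))) = S := by
  have : NeZero N := ⟨Nat.one_le_iff_ne_zero.1 hN⟩
  have hlattice (w : (Fin n → ℤ) × (Fin n → ℤ)) (f : 𝓢(Fin n → ℝ, ℂ)) :
      rhoT (castVec n w) (Complex.exp (Real.pi * Complex.I * ((QR n (castVec n w) : ℝ) : ℂ))) f =
        modulationCLM (latticeVec (N • w.2)) (translationCLM (latticeVec w.1) f) := by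
    ext z
    rw [hrhoT, rhoDualTest_castVec, modulationCLM_apply, translationCLM_apply]
  have hmem (j : Fin n → Fin N) : Ecomb (fun i ↦ ((j i : ℕ) : ℤ)) ∈ quasiPeriodicSpace N θ :=
    comb_mem_quasiPeriodicSpace (hEcomb _)
  have hindep := linearIndependent_comb (N := N) hEcomb
  obtain ⟨Φ, hΦ⟩ := exists_disjoint_quasiPeriodicSpace_ker N θ
  obtain ⟨hrank, hspan⟩ := finrank_eq_card_and_span_range_eq hindep hmem hΦ
  refine ⟨quasiPeriodicSpace N θ, ?_, ?_, hmem, hindep, hspan⟩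
  · ext ν
    simp only [hlattice, exp_sigmaR_castVec, Prod.forall, SetLike.mem_coe, Set.mem_ofPred_eq,
      mem_quasiPeriodicSpace]
  · rw [hrank, Fintype.card_pi_const, Fintype.card_fin]
end

section
/- Let N ≥ 1 be an integer and let u : ℝ^{2n} → ℂ be a smooth function satisfying the quasi-periodicity condition u(x+w) = e^{−πiN(Q(w)+σ(w,x))} u(x) for all x ∈ ℝ^{2n} and all w ∈ ℤ^{2n}. Then there exist Schwartz functions f_j ∈ 𝒮(ℝⁿ), indexed by j ∈ {0,1,…,N−1}ⁿ, such that u(x) = Σ_{j∈{0,…,N−1}ⁿ} Σ_{k∈ℤⁿ} (ρ_N(x) f_j)(k + j/N) for all x ∈ ℝ^{2n}, with absolute convergence of the inner series. (This is the surjectivity of the intertwining map U_{N,0} onto the smooth N-th Fourier mode of the prequantum bundle.) -/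
open BigOperators

/-!
The gauge transform `v(q, p) = e^{πiN⟨q,p⟩} u(q, p)` is `ℤⁿ`-periodic in `p` and satisfies
`v(q + a, p) = e^{2πiN⟨a,p⟩} v(q, p)` for `a ∈ ℤⁿ`. Hence its Fourier coefficients `c_m(q)` in `p`
satisfy `c_m(q + a) = c_{m - Na}(q)`, and since `N ≠ 0`, the rapid decay of `c_l(q)` and its
derivatives in `l`, uniform for `q` in a compact set, becomes rapid decay of `c_m(q)` in `q`: each
`c_m` is a Schwartz function. With `f_j(y) = c_j(j/N - y)` one has
`f_j(k + j/N - q) = c_{Nk + j}(q)`, so the claimed identity is the Fourier series of `v(q, ·)`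
grouped by the residue of the frequency modulo `N`.
-/

open MeasureTheory Set Topology UnitAddTorus
open scoped ContDiff

section PeriodicFunctions

variable {ι : Type*}

/-- The projection `ℝ^ι → (ℝ/ℤ)^ι`. -/
def toTorus (p : ι → ℝ) : UnitAddTorus ι := fun i ↦ (p i : UnitAddCircle)

/-- Invariance of a function on `ℝ^ι` under translation by `ℤ^ι`. -/
def IsLatticePeriodic {α : Type*} (h : (ι → ℝ) → α) : Prop :=
  ∀ (p : ι → ℝ) (b : ι → ℤ), h (p + fun i ↦ (b i : ℝ)) = h p

theorem toTorus_eq_iff {p p' : ι → ℝ} :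
    toTorus p = toTorus p' ↔ ∃ b : ι → ℤ, p' + (fun i ↦ (b i : ℝ)) = p := by
  have coe_eq_iff (x y : ℝ) : (x : UnitAddCircle) = y ↔ ∃ n : ℤ, y + n = x := by
    simp [QuotientAddGroup.eq_iff_sub_mem, AddSubgroup.mem_zmultiples_iff, eq_sub_iff_add_eq']
  simp only [toTorus, funext_iff, coe_eq_iff, Classical.skolem, Pi.add_apply]

theorem isQuotientMap_toTorus : IsQuotientMap (toTorus : (ι → ℝ) → UnitAddTorus ι) :=
  (IsOpenQuotientMap.piMap fun _ ↦ QuotientAddGroup.isOpenQuotientMap_mk).isQuotientMap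

@[fun_prop]
theorem continuous_toTorus : Continuous (toTorus : (ι → ℝ) → UnitAddTorus ι) :=
  isQuotientMap_toTorus.continuous

theorem IsLatticePeriodic.smul {M α : Type*} [SMul M α] {c : (ι → ℝ) → M} {h : (ι → ℝ) → α}
    (hc : IsLatticePeriodic c) (hh : IsLatticePeriodic h) :
    IsLatticePeriodic fun p ↦ c p • h p := fun p b ↦
  congrArg₂ (· • ·) (hc p b) (hh p b)

theorem IsLatticePeriodic.exists_continuousMap {α : Type*} [TopologicalSpace α] {h : (ι → ℝ) → α}
    (hh : IsLatticePeriodic h) (hc : Continuous h) :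
    ∃ F : C(UnitAddTorus ι, α), ∀ p, F (toTorus p) = h p := by
  let proj : C(ι → ℝ, UnitAddTorus ι) := ⟨toTorus, continuous_toTorus⟩
  have hfac : Function.FactorsThrough h proj := by
    intro p p' hpp'
    obtain ⟨b, rfl⟩ := toTorus_eq_iff.1 hpp'
    exact hh p' b
  have hproj : IsQuotientMap proj := isQuotientMap_toTorus
  exact ⟨hproj.lift ⟨h, hc⟩ hfac, DFunLike.congr_fun (hproj.lift_comp ⟨h, hc⟩ hfac)⟩

variable [Fintype ι]

theorem mFourier_toTorus (m : ι → ℤ) (p : ι → ℝ) :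
    mFourier m (toTorus p) = Complex.exp (2 * Real.pi * Complex.I * ∑ i, (m i : ℂ) * p i) := by
  simp only [mFourier, toTorus, ContinuousMap.coe_mk, fourier_coe_apply, ← Complex.exp_sum,
    Finset.mul_sum]
  congr! 2
  simp
  ring

theorem mFourier_toTorus_add (m : ι → ℤ) (p s : ι → ℝ) :
    mFourier m (toTorus (p + s)) = mFourier m (toTorus p) * mFourier m (toTorus s) := by
  simp [mFourier_toTorus, ← Complex.exp_add, mul_add, Finset.sum_add_distrib]

theorem norm_mFourier_toTorus (m : ι → ℤ) (p : ι → ℝ) : ‖mFourier m (toTorus p)‖ = 1 := by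
  simp only [mFourier, ContinuousMap.coe_mk, norm_prod, fourier_apply, Circle.norm_coe,
    Finset.prod_const_one]

theorem hasDerivAt_mFourier_toTorus_smul (m : ι → ℤ) (s : ι → ℝ) :
    HasDerivAt (fun t : ℝ ↦ mFourier m (toTorus (t • s)))
      (2 * Real.pi * Complex.I * ∑ i, (m i : ℂ) * s i) 0 := by
  have hexp (t : ℝ) : mFourier m (toTorus (t • s)) =
      Complex.exp (2 * Real.pi * Complex.I * (∑ i, (m i : ℂ) * s i) * t) := by
    rw [mFourier_toTorus, mul_assoc (2 * Real.pi * Complex.I), Finset.sum_mul]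
    simp only [Pi.smul_apply, smul_eq_mul, Complex.ofReal_mul, mul_comm (t : ℂ), mul_assoc]
  simp only [hexp]
  simpa using! (((hasDerivAt_id (0 : ℝ)).ofReal_comp).const_mul
    (2 * Real.pi * Complex.I * ∑ i, (m i : ℂ) * s i)).cexp

theorem isLatticePeriodic_mFourier_toTorus (m : ι → ℤ) :
    IsLatticePeriodic fun p : ι → ℝ ↦ mFourier m (toTorus p) := fun _ b ↦
  congrArg (mFourier m) (toTorus_eq_iff.2 ⟨b, rfl⟩)

variable {E : Type*} [NormedAddCommGroup E] [NormedSpace ℝ E]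

theorem setIntegral_Icc_add_one (h : (ι → ℝ) → E) (a : ι → ℝ) :
    ∫ p in Icc a (a + 1), h p = ∫ p in {p | ∀ i, p i ∈ Ioc (a i) (a i + 1)}, h p := by
  have hbox : {p | ∀ i, p i ∈ Ioc (a i) (a i + 1)} = univ.pi fun i ↦ Ioc (a i) ((a + 1) i) := by
    ext
    simp
  rw [hbox, volume_pi, setIntegral_congr_set Measure.univ_pi_Ioc_ae_eq_Icc]

theorem mFourierCoeff_eq_setIntegral (F : UnitAddTorus ι → ℂ) (m : ι → ℤ) :
    mFourierCoeff F m = ∫ p in Icc (0 : ι → ℝ) 1, mFourier (-m) (toTorus p) • F (toTorus p) := by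
  rw [mFourierCoeff_eq_integral F m 0, ← setIntegral_Icc_add_one, zero_add]
  rfl

theorem IsLatticePeriodic.setIntegral_Icc_add_one_eq {h : (ι → ℝ) → E}
    (hh : IsLatticePeriodic h) (hc : Continuous h) (a : ι → ℝ) :
    ∫ p in Icc a (a + 1), h p = ∫ p in Icc 0 1, h p := by
  obtain ⟨F, hF⟩ := hh.exists_continuousMap hc
  have hint (a : ι → ℝ) := (setIntegral_Icc_add_one (F ∘ toTorus) a).trans
    (integral_preimage F a).symm
  simpa [hF] using (hint a).trans (hint 0).symm

theorem IsLatticePeriodic.setIntegral_Icc_comp_add_right {h : (ι → ℝ) → E}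
    (hh : IsLatticePeriodic h) (hc : Continuous h) (s : ι → ℝ) :
    ∫ p in Icc 0 1, h (p + s) = ∫ p in Icc 0 1, h p := by
  rw [← hh.setIntegral_Icc_add_one_eq hc s,
    ← (measurePreserving_add_right volume s).setIntegral_preimage_emb
      (measurableEmbedding_addRight s) h]
  simp [add_comm s 1]

variable [NormedSpace ℂ E]

theorem IsLatticePeriodic.setIntegral_mFourier_smul_comp_add_right {h : (ι → ℝ) → E}
    (hh : IsLatticePeriodic h) (hc : Continuous h) (m : ι → ℤ) (s : ι → ℝ) :
    ∫ p in Icc 0 1, mFourier (-m) (toTorus p) • h (p + s) =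
      mFourier m (toTorus s) • ∫ p in Icc 0 1, mFourier (-m) (toTorus p) • h p := by
  have hphase (p : ι → ℝ) : mFourier (-m) (toTorus p) =
      mFourier m (toTorus s) * mFourier (-m) (toTorus (p + s)) := by
    rw [mFourier_toTorus_add, mul_left_comm, ← mFourier_add, add_neg_cancel, mFourier_zero,
      ContinuousMap.one_apply, mul_one]
  have hint := ((isLatticePeriodic_mFourier_toTorus (-m)).smul hh).setIntegral_Icc_comp_add_right
    (by fun_prop) s
  rw [← hint, ← integral_smul]
  simp only [smul_smul, ← hphase]

end PeriodicFunctions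

section ParametricIntegral

variable {X V E : Type*} [TopologicalSpace X] [T2Space X] [MeasurableSpace X] [BorelSpace X]
  [NormedAddCommGroup V] [NormedSpace ℝ V] [ProperSpace V]
  [NormedAddCommGroup E] [NormedSpace ℝ E]

theorem hasFDerivAt_setIntegral_of_isCompact {μ : Measure X} [IsFiniteMeasureOnCompacts μ]
    {K : Set X} (hK : IsCompact K) {F : V → X → E} {F' : V → X → V →L[ℝ] E}
    (hF : ∀ x, Continuous (F x)) (hF' : Continuous ↿F')
    (hFF' : ∀ x p, HasFDerivAt (F · p) (F' x p) x) (x₀ : V) :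
    HasFDerivAt (fun x ↦ ∫ p in K, F x p ∂μ) (∫ p in K, F' x₀ p ∂μ) x₀ := by
  obtain ⟨C, hC⟩ := ((isCompact_closedBall x₀ 1).prod hK).exists_bound_of_continuousOn
    hF'.continuousOn
  have hbound : ∀ᵐ p ∂μ.restrict K, ∀ x ∈ Metric.closedBall x₀ 1, ‖F' x p‖ ≤ C :=
    ae_restrict_of_forall_mem hK.measurableSet fun p hp x hx ↦ hC (x, p) ⟨hx, hp⟩
  exact hasFDerivAt_integral_of_dominated_of_fderiv_le (Metric.closedBall_mem_nhds x₀ one_pos)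
    (.of_forall fun x ↦ (hF x).continuousOn.aestronglyMeasurable_of_isCompact hK hK.measurableSet)
    ((hF x₀).continuousOn.integrableOn_compact hK)
    ((hF'.comp (Continuous.prodMk_right x₀)).continuousOn.aestronglyMeasurable_of_isCompact hK
      hK.measurableSet)
    hbound (integrableOn_const hK.measure_lt_top.ne) (.of_forall fun p x _ ↦ hFF' x p)

end ParametricIntegral

section PartialFourierCoeff

variable {ι V E : Type*} [Fintype ι] [NormedAddCommGroup E] [NormedSpace ℝ E] [NormedSpace ℂ E]

/-- The `m`-th Fourier coefficient of `g (x, ·)` as a function of the parameter `x`, for `g`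
periodic in its second variable. -/
noncomputable def partialFourierCoeff (g : V × (ι → ℝ) → E) (m : ι → ℤ) (x : V) : E :=
  ∫ p in Icc 0 1, mFourier (-m) (toTorus p) • g (x, p)

theorem norm_partialFourierCoeff_le {g : V × (ι → ℝ) → E} {x : V} {C : ℝ} (m : ι → ℤ)
    (hC : ∀ p ∈ Icc (0 : ι → ℝ) 1, ‖g (x, p)‖ ≤ C) : ‖partialFourierCoeff g m x‖ ≤ C := by
  have hC' : ∀ p ∈ Icc (0 : ι → ℝ) 1, ‖mFourier (-m) (toTorus p) • g (x, p)‖ ≤ C := by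
    simpa only [norm_smul, norm_mFourier_toTorus, one_mul] using hC
  simpa [measureReal_def, Real.volume_Icc_pi, partialFourierCoeff] using
    norm_setIntegral_le_of_norm_le_const (μ := volume) isCompact_Icc.measure_lt_top hC'

end PartialFourierCoeff

section PartialDerivatives

variable {V W E : Type*} [NormedAddCommGroup V] [NormedSpace ℝ V] [NormedAddCommGroup W]
  [NormedSpace ℝ W] [NormedAddCommGroup E] [NormedSpace ℝ E] {g : V × W → E}

/-- The partial derivative in the first variable. -/
noncomputable def fderivFst (g : V × W → E) (z : V × W) : V →L[ℝ] E :=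
  fderiv ℝ g z ∘L ContinuousLinearMap.inl ℝ V W

/-- The partial derivative in the second variable. -/
noncomputable def fderivSnd (g : V × W → E) (z : V × W) : W →L[ℝ] E :=
  fderiv ℝ g z ∘L ContinuousLinearMap.inr ℝ V W

theorem contDiff_fderivFst {n m : WithTop ℕ∞} (hg : ContDiff ℝ n g) (hmn : m + 1 ≤ n) :
    ContDiff ℝ m (fderivFst g) :=
  (hg.fderiv_right hmn).clm_comp contDiff_const

theorem hasFDerivAt_fderivFst {x : V} {y : W} (hg : DifferentiableAt ℝ g (x, y)) :
    HasFDerivAt (fun x ↦ g (x, y)) (fderivFst g (x, y)) x :=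
  hg.hasFDerivAt.comp x (hasFDerivAt_prodMk_left x y)

theorem hasFDerivAt_fderivSnd {x : V} {y : W} (hg : DifferentiableAt ℝ g (x, y)) :
    HasFDerivAt (fun y ↦ g (x, y)) (fderivSnd g (x, y)) y :=
  hg.hasFDerivAt.comp y (hasFDerivAt_prodMk_right x y)

end PartialDerivatives

section SmoothPeriodicFamilies

variable {ι V E F : Type*} [Fintype ι] [NormedAddCommGroup V] [NormedSpace ℝ V]
  [NormedAddCommGroup E] [NormedSpace ℝ E] [NormedAddCommGroup F] [NormedSpace ℝ F]

/-- A smooth family, parametrized by `V`, of `ℤ^ι`-periodic functions on `ℝ^ι`. -/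
structure IsSmoothPeriodicFamily (g : V × (ι → ℝ) → E) : Prop where
  contDiff : ContDiff ℝ ∞ g
  isLatticePeriodic (x : V) : IsLatticePeriodic fun p ↦ g (x, p)

variable {g : V × (ι → ℝ) → E}

theorem IsSmoothPeriodicFamily.clm_comp_fderiv (hg : IsSmoothPeriodicFamily g)
    (L : (V × (ι → ℝ) →L[ℝ] E) →L[ℝ] F) : IsSmoothPeriodicFamily fun z ↦ L (fderiv ℝ g z) where
  contDiff := L.contDiff.comp (hg.contDiff.fderiv_right (by simp))
  isLatticePeriodic x p b := by
    have hshift : (fun z ↦ g (z + (0, fun i ↦ (b i : ℝ)))) = g := by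
      ext ⟨y, p⟩
      simpa using hg.isLatticePeriodic y p b
    have hfderiv := fderiv_comp_add_right (𝕜 := ℝ) (f := g) (x := (x, p)) (0, fun i ↦ (b i : ℝ))
    rw [hshift, Prod.mk_add_mk, add_zero] at hfderiv
    exact congrArg L hfderiv.symm

theorem IsSmoothPeriodicFamily.fderivFst (hg : IsSmoothPeriodicFamily g) :
    IsSmoothPeriodicFamily (fderivFst g) :=
  hg.clm_comp_fderiv <| (ContinuousLinearMap.compL ℝ _ (V × (ι → ℝ)) E).flip <|
    ContinuousLinearMap.inl ℝ V (ι → ℝ)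

theorem IsSmoothPeriodicFamily.fderivSnd (hg : IsSmoothPeriodicFamily g) :
    IsSmoothPeriodicFamily (fderivSnd g) :=
  hg.clm_comp_fderiv <| (ContinuousLinearMap.compL ℝ _ (V × (ι → ℝ)) E).flip <|
    ContinuousLinearMap.inr ℝ V (ι → ℝ)

variable [NormedSpace ℂ E] [IsScalarTower ℝ ℂ E]

theorem hasFDerivAt_partialFourierCoeff [ProperSpace V] (hg : ContDiff ℝ 1 g) (m : ι → ℤ)
    (x : V) : HasFDerivAt (partialFourierCoeff g m) (partialFourierCoeff (fderivFst g) m x) x := by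
  have hg' : Continuous (fderivFst g) := (contDiff_fderivFst (m := 0) hg (by simp)).continuous
  have := hg.continuous
  exact hasFDerivAt_setIntegral_of_isCompact isCompact_Icc (by fun_prop)
    (F' := fun x p ↦ mFourier (-m) (toTorus p) • fderivFst g (x, p)) (by fun_prop)
    (fun x p ↦ (hasFDerivAt_fderivFst (hg.differentiable one_ne_zero _)).const_smul _) x

theorem fderiv_partialFourierCoeff [ProperSpace V] (hg : ContDiff ℝ 1 g) (m : ι → ℤ) :
    fderiv ℝ (partialFourierCoeff g m) = partialFourierCoeff (fderivFst g) m :=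
  funext fun x ↦ (hasFDerivAt_partialFourierCoeff hg m x).fderiv

theorem partialFourierCoeff_fderivSnd_apply (hg : IsSmoothPeriodicFamily g) (m : ι → ℤ) (x : V)
    (s : ι → ℝ) :
    partialFourierCoeff (fderivSnd g) m x s =
      (2 * Real.pi * Complex.I * ∑ i, (m i : ℂ) * s i) • partialFourierCoeff g m x := by
  have hdiff := hg.contDiff.differentiable (by simp)
  let translate : (ι → ℝ) × (ι → ℝ) → E := fun z ↦ g (x, z.2 + z.1)
  have htranslate : ContDiff ℝ 1 translate := by
    have := hg.contDiff.of_le (m := 1) (by simp)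
    fun_prop
  have hcoeff (y : ι → ℝ) : partialFourierCoeff translate m y =
      mFourier m (toTorus y) • partialFourierCoeff g m x :=
    (hg.isLatticePeriodic x).setIntegral_mFourier_smul_comp_add_right
      (hg.contDiff.continuous.comp (Continuous.prodMk_right x)) m y
  have hpartial (p : ι → ℝ) : fderivFst translate (0, p) = fderivSnd g (x, p) := by
    refine (hasFDerivAt_fderivFst (htranslate.differentiable one_ne_zero _)).unique ?_
    simpa [translate] using (hasFDerivAt_comp_add_left (x := 0) p).2
      (hasFDerivAt_fderivSnd (hdiff (x, p + 0)))
  have hderiv : HasFDerivAt (partialFourierCoeff translate m)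
      (partialFourierCoeff (fderivSnd g) m x) 0 := by
    simpa only [partialFourierCoeff, hpartial] using hasFDerivAt_partialFourierCoeff htranslate m 0
  have hline : HasDerivAt (fun t : ℝ ↦ t • s) s 0 := by
    simpa using (hasDerivAt_id (0 : ℝ)).smul_const s
  refine ((zero_smul ℝ s).symm ▸ hderiv).comp_hasDerivAt 0 hline |>.unique ?_
  simpa only [Function.comp_def, hcoeff] using (hasDerivAt_mFourier_toTorus_smul m s).smul_const _

theorem norm_mul_norm_partialFourierCoeff_le (hg : IsSmoothPeriodicFamily g) (m : ι → ℤ) (x : V) :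
    ‖m‖ * ‖partialFourierCoeff g m x‖ ≤ ‖partialFourierCoeff (fderivSnd g) m x‖ := by
  classical
  rcases (norm_nonneg (partialFourierCoeff g m x)).eq_or_lt with hzero | hpos
  · simp [← hzero]
  rw [← le_div_iff₀ hpos, pi_norm_le_iff_of_nonneg (by positivity)]
  intro i
  rw [le_div_iff₀ hpos]
  calc ‖m i‖ * ‖partialFourierCoeff g m x‖
    _ ≤ 2 * Real.pi * ‖m i‖ * ‖partialFourierCoeff g m x‖ := by
      gcongr
      exact le_mul_of_one_le_left (norm_nonneg _) (by linarith [Real.pi_gt_three])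
    _ = ‖partialFourierCoeff (fderivSnd g) m x (Pi.single i 1)‖ := by
      simp [partialFourierCoeff_fderivSnd_apply hg, norm_smul, Pi.single_apply,
        abs_of_pos Real.pi_pos, apply_ite Complex.ofReal, Int.norm_eq_abs]
    _ ≤ ‖partialFourierCoeff (fderivSnd g) m x‖ := by
      simpa [Pi.norm_single] using
        (partialFourierCoeff (fderivSnd g) m x).le_opNorm (Pi.single i 1)

end SmoothPeriodicFamilies

section FourierCoefficientDecay

universe u

variable {ι V E : Type u} [Fintype ι] [NormedAddCommGroup V] [NormedSpace ℝ V]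
  [NormedAddCommGroup E] [NormedSpace ℝ E] [NormedSpace ℂ E] [IsScalarTower ℝ ℂ E]
  {g : V × (ι → ℝ) → E}

theorem exists_norm_partialFourierCoeff_le (hg : IsSmoothPeriodicFamily g) {K : Set V}
    (hK : IsCompact K) (k : ℕ) :
    ∃ C, ∀ x ∈ K, ∀ m, (1 + ‖m‖) ^ k * ‖partialFourierCoeff g m x‖ ≤ C := by
  induction k generalizing E with
  | zero =>
    have hbox : IsCompact (K ×ˢ Icc (0 : ι → ℝ) 1) := hK.prod isCompact_Icc
    obtain ⟨C, hC⟩ := hbox.exists_bound_of_continuousOn hg.contDiff.continuous.continuousOn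
    refine ⟨C, fun x hx m ↦ ?_⟩
    rw [pow_zero, one_mul]
    exact norm_partialFourierCoeff_le m fun p hp ↦ hC (x, p) ⟨hx, hp⟩
  | succ k ih =>
    obtain ⟨C₁, hC₁⟩ := ih hg
    obtain ⟨C₂, hC₂⟩ := ih hg.fderivSnd
    refine ⟨C₁ + C₂, fun x hx m ↦ ?_⟩
    calc (1 + ‖m‖) ^ (k + 1) * ‖partialFourierCoeff g m x‖
      _ = (1 + ‖m‖) ^ k * ‖partialFourierCoeff g m x‖ +
          (1 + ‖m‖) ^ k * (‖m‖ * ‖partialFourierCoeff g m x‖) := by ring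
      _ ≤ (1 + ‖m‖) ^ k * ‖partialFourierCoeff g m x‖ +
          (1 + ‖m‖) ^ k * ‖partialFourierCoeff (fderivSnd g) m x‖ := by
        gcongr
        exact norm_mul_norm_partialFourierCoeff_le hg m x
      _ ≤ C₁ + C₂ := add_le_add (hC₁ x hx m) (hC₂ x hx m)

variable [ProperSpace V]

theorem contDiff_partialFourierCoeff (n : ℕ) (hg : ContDiff ℝ n g) (m : ι → ℤ) :
    ContDiff ℝ n (partialFourierCoeff g m) := by
  induction n generalizing E with
  | zero =>
    have := hg.continuous
    exact contDiff_zero.2 <|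
      continuous_parametric_integral_of_continuous (by fun_prop) isCompact_Icc
  | succ n ih =>
    exact contDiff_succ_iff_hasFDerivAt.2 ⟨partialFourierCoeff (fderivFst g) m,
      ih (contDiff_fderivFst hg le_rfl),
      fun x ↦ hasFDerivAt_partialFourierCoeff (hg.of_le (by simp)) m x⟩

theorem exists_norm_iteratedFDeriv_partialFourierCoeff_le (hg : IsSmoothPeriodicFamily g)
    {K : Set V} (hK : IsCompact K) (k d : ℕ) :
    ∃ C, ∀ x ∈ K, ∀ m, (1 + ‖m‖) ^ k * ‖iteratedFDeriv ℝ d (partialFourierCoeff g m) x‖ ≤ C := by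
  induction d generalizing E with
  | zero => simpa only [norm_iteratedFDeriv_zero] using exists_norm_partialFourierCoeff_le hg hK k
  | succ d ih =>
    simpa only [← norm_iteratedFDeriv_fderiv,
      fderiv_partialFourierCoeff (hg.contDiff.of_le (by simp))] using ih hg.fderivFst

end FourierCoefficientDecay

section QuasiperiodicFamilies

variable {ι E : Type*} [Fintype ι] [NormedAddCommGroup E] [NormedSpace ℝ E] [NormedSpace ℂ E]

/-- A smooth family of periodic functions, parametrized by `ℝ^ι`, whose Fourier series is shifted by
`N • a` under the translation of the parameter by `a ∈ ℤ^ι`. -/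
structure IsQuasiperiodicFamily (N : ℤ) (g : (ι → ℝ) × (ι → ℝ) → E) : Prop
    extends IsSmoothPeriodicFamily g where
  map_add_intCast (q p : ι → ℝ) (a : ι → ℤ) :
    g (q + fun i ↦ (a i : ℝ), p) = mFourier (N • a) (toTorus p) • g (q, p)

namespace IsQuasiperiodicFamily

variable {N : ℤ} {g : (ι → ℝ) × (ι → ℝ) → E}

theorem partialFourierCoeff_add_intCast (hg : IsQuasiperiodicFamily N g) (m a : ι → ℤ)
    (q : ι → ℝ) :
    partialFourierCoeff g m (q + fun i ↦ (a i : ℝ)) = partialFourierCoeff g (m - N • a) q := by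
  simp only [partialFourierCoeff, hg.map_add_intCast, smul_smul, ← mFourier_add, neg_sub,
    neg_add_eq_sub]

theorem iteratedFDeriv_partialFourierCoeff_add_intCast (hg : IsQuasiperiodicFamily N g)
    (m a : ι → ℤ) (d : ℕ) (q : ι → ℝ) :
    iteratedFDeriv ℝ d (partialFourierCoeff g m) (q + fun i ↦ (a i : ℝ)) =
      iteratedFDeriv ℝ d (partialFourierCoeff g (m - N • a)) q := by
  rw [← iteratedFDeriv_comp_add_right]
  simp only [hg.partialFourierCoeff_add_intCast]

end IsQuasiperiodicFamily

theorem pi_norm_intCast (a : ι → ℤ) : ‖fun i ↦ (a i : ℝ)‖ = ‖a‖ := rfl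

theorem norm_add_intCast_le {N : ℤ} (hN : N ≠ 0) (m a : ι → ℤ) {q : ι → ℝ} (hq : ‖q‖ ≤ 1) :
    ‖q + fun i ↦ (a i : ℝ)‖ ≤ (1 + ‖m‖) * (1 + ‖m - N • a‖) := by
  have ha : ‖fun i ↦ (a i : ℝ)‖ ≤ ‖m‖ + ‖m - N • a‖ :=
    calc ‖fun i ↦ (a i : ℝ)‖
      _ = 1 * ‖a‖ := by rw [pi_norm_intCast, one_mul]
      _ ≤ ‖N‖ * ‖a‖ := by
        gcongr
        rw [Int.norm_eq_abs]
        exact_mod_cast Int.one_le_abs hN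
      _ = ‖m - (m - N • a)‖ := by rw [sub_sub_cancel, norm_smul]
      _ ≤ ‖m‖ + ‖m - N • a‖ := norm_sub_le _ _
  calc ‖q + fun i ↦ (a i : ℝ)‖
    _ ≤ ‖q‖ + ‖fun i ↦ (a i : ℝ)‖ := norm_add_le _ _
    _ ≤ 1 + (‖m‖ + ‖m - N • a‖) := add_le_add hq ha
    _ ≤ (1 + ‖m‖) * (1 + ‖m - N • a‖) := by
      nlinarith [mul_nonneg (norm_nonneg m) (norm_nonneg (m - N • a))]

end QuasiperiodicFamilies

section SchwartzCoefficients

universe u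

variable {ι E : Type u} [Fintype ι] [NormedAddCommGroup E] [NormedSpace ℝ E] [NormedSpace ℂ E]
  [IsScalarTower ℝ ℂ E] {N : ℤ} {g : (ι → ℝ) × (ι → ℝ) → E}

namespace IsQuasiperiodicFamily

theorem exists_norm_pow_mul_iteratedFDeriv_le (hg : IsQuasiperiodicFamily N g) (hN : N ≠ 0)
    (m : ι → ℤ) (k d : ℕ) :
    ∃ C, ∀ q, ‖q‖ ^ k * ‖iteratedFDeriv ℝ d (partialFourierCoeff g m) q‖ ≤ C := by
  obtain ⟨C, hC⟩ := exists_norm_iteratedFDeriv_partialFourierCoeff_le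
    hg.toIsSmoothPeriodicFamily (isCompact_closedBall (0 : ι → ℝ) 1) k d
  refine ⟨(1 + ‖m‖) ^ k * C, fun q ↦ ?_⟩
  obtain ⟨r, a, hr, rfl⟩ : ∃ (r : ι → ℝ) (a : ι → ℤ), ‖r‖ ≤ 1 ∧ r + (fun i ↦ (a i : ℝ)) = q :=
    ⟨fun i ↦ Int.fract (q i), fun i ↦ ⌊q i⌋,
      (pi_norm_le_iff_of_nonneg zero_le_one).2 fun i ↦ by
        simpa [abs_of_nonneg, Int.fract_nonneg] using (Int.fract_lt_one (q i)).le,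
      funext fun i ↦ Int.fract_add_floor (q i)⟩
  rw [hg.iteratedFDeriv_partialFourierCoeff_add_intCast]
  calc ‖r + fun i ↦ (a i : ℝ)‖ ^ k * ‖iteratedFDeriv ℝ d (partialFourierCoeff g (m - N • a)) r‖
    _ ≤ ((1 + ‖m‖) * (1 + ‖m - N • a‖)) ^ k *
        ‖iteratedFDeriv ℝ d (partialFourierCoeff g (m - N • a)) r‖ := by
      gcongr
      exact norm_add_intCast_le hN m a hr
    _ = (1 + ‖m‖) ^ k * ((1 + ‖m - N • a‖) ^ k *
        ‖iteratedFDeriv ℝ d (partialFourierCoeff g (m - N • a)) r‖) := by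
      rw [mul_pow, mul_assoc]
    _ ≤ (1 + ‖m‖) ^ k * C := by
      gcongr
      exact hC r (mem_closedBall_zero_iff.2 hr) _

/-- The `m`-th Fourier coefficient of a quasi-periodic family as a Schwartz function of the
parameter. -/
noncomputable def schwartzCoeff (hg : IsQuasiperiodicFamily N g) (hN : N ≠ 0) (m : ι → ℤ) :
    SchwartzMap (ι → ℝ) E where
  toFun := partialFourierCoeff g m
  smooth' := contDiff_infty.2 fun n ↦
    contDiff_partialFourierCoeff n (hg.contDiff.of_le (by exact_mod_cast le_top)) m
  decay' := hg.exists_norm_pow_mul_iteratedFDeriv_le hN m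

end IsQuasiperiodicFamily

end SchwartzCoefficients

section FourierSeries

variable {ι : Type*} [Fintype ι]

theorem summable_norm_pow_card_add_one_inv :
    Summable fun m : ι → ℤ ↦ (‖m‖ ^ (Fintype.card ι + 1))⁻¹ := by
  let b := (Pi.basisFun ℝ ι).restrictScalars ℤ
  have hrank : Module.finrank ℤ (Submodule.span ℤ (range (Pi.basisFun ℝ ι))) = Fintype.card ι :=
    Module.finrank_eq_card_basis b
  have hcoe (m : ι → ℤ) : (b.equivFun.symm m : ι → ℝ) = fun i ↦ (m i : ℝ) := by
    classical
    ext i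
    simp [b, Module.Basis.equivFun_symm_apply, Pi.single_apply]
  have hsum := ZLattice.summable_norm_pow_inv (Submodule.span ℤ (range (Pi.basisFun ℝ ι)))
    (Fintype.card ι + 1) (by omega)
  refine (b.equivFun.symm.toEquiv.summable_iff.2 hsum).congr fun m ↦ ?_
  simp only [Function.comp_apply, LinearEquiv.coe_toEquiv, Submodule.coe_norm, hcoe,
    pi_norm_intCast, inv_pow]

theorem summable_of_norm_pow_mul_le {E : Type*} [NormedAddCommGroup E] [CompleteSpace E]
    {c : (ι → ℤ) → E} {C : ℝ} (hC : ∀ m, (1 + ‖m‖) ^ (Fintype.card ι + 1) * ‖c m‖ ≤ C) :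
    Summable c := by
  refine Summable.of_norm_bounded_eventually (summable_norm_pow_card_add_one_inv.mul_left C) ?_
  filter_upwards [(finite_singleton (0 : ι → ℤ)).compl_mem_cofinite] with m hm
  rw [← div_eq_mul_inv, le_div_iff₀' (pow_pos (norm_pos_iff.2 hm) _)]
  refine le_trans ?_ (hC m)
  gcongr
  linarith

theorem hasSum_partialFourierCoeff {ι V : Type} [Fintype ι] [NormedAddCommGroup V] [NormedSpace ℝ V]
    {g : V × (ι → ℝ) → ℂ} (hg : IsSmoothPeriodicFamily g) (x : V) (p : ι → ℝ) :
    HasSum (fun m ↦ partialFourierCoeff g m x * mFourier m (toTorus p)) (g (x, p)) := by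
  obtain ⟨F, hF⟩ := (hg.isLatticePeriodic x).exists_continuousMap
    (hg.contDiff.continuous.comp (Continuous.prodMk_right x))
  have hcoeff : mFourierCoeff F = fun m ↦ partialFourierCoeff g m x := by
    ext m
    simp only [mFourierCoeff_eq_setIntegral, hF, partialFourierCoeff]
  obtain ⟨C, hC⟩ := exists_norm_partialFourierCoeff_le hg (isCompact_singleton (x := x))
    (Fintype.card ι + 1)
  have hsum : Summable (mFourierCoeff F) := hcoeff ▸ summable_of_norm_pow_mul_le (hC x rfl)
  simpa [hcoeff, hF] using hasSum_mFourier_series_apply_of_summable hsum (toTorus p)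

end FourierSeries

section Intertwiner

variable {n N : ℕ}

/-- The quasi-periodicity condition defining the `N`-th Fourier mode of the prequantum bundle. -/
def IsPrequantumMode (n N : ℕ) (u : (Fin n → ℝ) × (Fin n → ℝ) → ℂ) : Prop :=
  ∀ (x : (Fin n → ℝ) × (Fin n → ℝ)) (w : (Fin n → ℤ) × (Fin n → ℤ)),
    u (x + castVec n w)
      = Complex.exp (-(Real.pi * Complex.I * (N : ℂ)) *
          (((QR n (castVec n w) : ℝ) : ℂ) + ((sigmaR n (castVec n w) x : ℝ) : ℂ))) * u x

/-- The gauge transform `(q, p) ↦ e^{πiN⟨q,p⟩} u(q, p)`, which makes a prequantum mode periodic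
in `p`. -/
noncomputable def gaugeTransform (N : ℕ) (u : (Fin n → ℝ) × (Fin n → ℝ) → ℂ)
    (x : (Fin n → ℝ) × (Fin n → ℝ)) : ℂ :=
  Complex.exp (Real.pi * Complex.I * N * (QR n x : ℝ)) * u x

variable {u : (Fin n → ℝ) × (Fin n → ℝ) → ℂ}

theorem contDiff_gaugeTransform {r : WithTop ℕ∞} (hu : ContDiff ℝ r u) :
    ContDiff ℝ r (gaugeTransform N u) := by
  have hQ : ContDiff ℝ r (QR n) := by
    unfold QR
    fun_prop
  exact ((contDiff_const.mul (Complex.ofRealCLM.contDiff.comp hQ)).cexp).mul hu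

theorem QR_add (x w : (Fin n → ℝ) × (Fin n → ℝ)) :
    QR n (x + w) = QR n x + (QR n w + sigmaR n w x) + 2 * ∑ i, w.1 i * x.2 i := by
  simp only [QR, sigmaR, Prod.fst_add, Prod.snd_add, Pi.add_apply, Finset.mul_sum,
    ← Finset.sum_add_distrib, ← Finset.sum_sub_distrib]
  exact Finset.sum_congr rfl fun i _ ↦ by ring

theorem IsPrequantumMode.gaugeTransform_add_castVec (hu : IsPrequantumMode n N u)
    (x : (Fin n → ℝ) × (Fin n → ℝ)) (w : (Fin n → ℤ) × (Fin n → ℤ)) :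
    gaugeTransform N u (x + castVec n w) =
      mFourier ((N : ℤ) • w.1) (toTorus x.2) • gaugeTransform N u x := by
  rw [gaugeTransform, gaugeTransform, hu x w, smul_eq_mul, mFourier_toTorus, ← mul_assoc,
    ← mul_assoc, ← Complex.exp_add, ← Complex.exp_add, QR_add]
  congr 2
  simp only [castVec, Pi.smul_apply, smul_eq_mul]
  push_cast
  simp only [mul_assoc, ← Finset.mul_sum]
  ring

theorem IsPrequantumMode.isQuasiperiodicFamily_gaugeTransform (hper : IsPrequantumMode n N u)
    (hu : ContDiff ℝ ∞ u) : IsQuasiperiodicFamily N (gaugeTransform N u) where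
  contDiff := contDiff_gaugeTransform hu
  isLatticePeriodic q p b := by
    simpa [castVec, mFourier_zero, ← Pi.zero_def] using
      hper.gaugeTransform_add_castVec (q, p) (0, b)
  map_add_intCast q p a := by
    simpa [castVec, ← Pi.zero_def] using hper.gaugeTransform_add_castVec (q, p) (a, 0)

theorem rho_one_apply_of_mul_eq (f : (Fin n → ℝ) → ℂ) {y : Fin n → ℝ} {m : Fin n → ℤ}
    (hy : ∀ i, N * y i = m i) (q p : Fin n → ℝ) :
    rho n N (q, p) 1 f y = Complex.exp (-(Real.pi * Complex.I * N * (QR n (q, p) : ℝ))) *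
      (f (y - q) * mFourier m (toTorus p)) := by
  have hm : ∑ i, (m i : ℂ) * p i = N * ∑ i, (p i : ℂ) * y i := by
    rw [Finset.mul_sum]
    refine Finset.sum_congr rfl fun i _ ↦ ?_
    have : (m i : ℂ) = N * y i := by exact_mod_cast (hy i).symm
    rw [this]
    ring
  rw [rho, mFourier_toTorus, hm, mul_left_comm, mul_comm (f (y - q)), ← mul_assoc,
    ← Complex.exp_add, one_pow, one_mul]
  congr 2
  push_cast
  ring

/-- Division with remainder modulo `N` in each coordinate: `(j, k)` corresponds to `k * N + j`. -/
def residueEquiv (ι : Type*) (N : ℕ) [NeZero N] : (ι → Fin N) × (ι → ℤ) ≃ (ι → ℤ) :=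
  (Equiv.prodComm _ _).trans <|
    (Equiv.arrowProdEquivProdArrow ι (fun _ ↦ ℤ) (fun _ ↦ Fin N)).symm.trans <|
      Equiv.piCongrRight fun _ ↦ (Int.divModEquiv N).symm

theorem residueEquiv_apply {ι : Type*} [NeZero N] (j : ι → Fin N) (k : ι → ℤ) :
    residueEquiv ι N (j, k) = fun i ↦ k i * N + ((j i : ℕ) : ℤ) := by
  ext i
  simp [residueEquiv, Equiv.arrowProdEquivProdArrow, Int.divModEquiv]

namespace IsQuasiperiodicFamily

variable [NeZero N] {g : (Fin n → ℝ) × (Fin n → ℝ) → ℂ}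

/-- The Schwartz function `y ↦ c_j(j / N - y)`, where `c_j` is the `j`-th Fourier coefficient of
the family. -/
noncomputable def residueSchwartz (hg : IsQuasiperiodicFamily N g) (j : Fin n → Fin N) :
    SchwartzMap (Fin n → ℝ) ℂ :=
  (SchwartzMap.compCLMOfContinuousLinearEquiv ℝ (ContinuousLinearEquiv.neg ℝ)
    (hg.schwartzCoeff (by exact_mod_cast NeZero.ne N) fun i ↦ ((j i : ℕ) : ℤ))).compSubConstCLM ℝ
      fun i ↦ ((j i : ℕ) : ℝ) / N

theorem residueSchwartz_apply (hg : IsQuasiperiodicFamily N g) (j : Fin n → Fin N)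
    (y : Fin n → ℝ) :
    hg.residueSchwartz j y = partialFourierCoeff g (fun i ↦ ((j i : ℕ) : ℤ))
      ((fun i ↦ ((j i : ℕ) : ℝ) / N) - y) := by
  rw [← neg_sub y]
  rfl

theorem residueSchwartz_add_div_sub (hg : IsQuasiperiodicFamily N g) (j : Fin n → Fin N)
    (k : Fin n → ℤ) (q : Fin n → ℝ) :
    hg.residueSchwartz j ((fun i ↦ (k i : ℝ) + ((j i : ℕ) : ℝ) / N) - q) =
      partialFourierCoeff g (residueEquiv (Fin n) N (j, k)) q := by
  have hm : residueEquiv (Fin n) N (j, k) = (fun i ↦ ((j i : ℕ) : ℤ)) - (N : ℤ) • (-k) := by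
    rw [residueEquiv_apply]
    ext i
    simp
    ring
  rw [residueSchwartz_apply, hm, ← hg.partialFourierCoeff_add_intCast]
  congr 1
  ext i
  simp
  ring

end IsQuasiperiodicFamily

theorem hasSum_rho_residueSchwartz [NeZero N]
    (hg : IsQuasiperiodicFamily N (gaugeTransform N u)) (x : (Fin n → ℝ) × (Fin n → ℝ)) :
    HasSum (fun jk : (Fin n → Fin N) × (Fin n → ℤ) ↦ rho n N x 1 (hg.residueSchwartz jk.1)
      fun i ↦ (jk.2 i : ℝ) + ((jk.1 i : ℕ) : ℝ) / N) (u x) := by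
  obtain ⟨q, p⟩ := x
  have hfourier := (residueEquiv (Fin n) N).hasSum_iff.2
    (hasSum_partialFourierCoeff hg.toIsSmoothPeriodicFamily q p)
  convert! hfourier.mul_left (Complex.exp (-(Real.pi * Complex.I * N * (QR n (q, p) : ℝ)))) using 1
  · ext ⟨j, k⟩
    have hN : (N : ℝ) ≠ 0 := NeZero.ne _
    rw [rho_one_apply_of_mul_eq (m := residueEquiv (Fin n) N (j, k)),
      hg.residueSchwartz_add_div_sub]
    · rfl
    · intro i
      rw [residueEquiv_apply]
      push_cast
      field_simp
  · rw [gaugeTransform, ← mul_assoc, ← Complex.exp_add, neg_add_cancel, Complex.exp_zero, one_mul]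

end Intertwiner

/-- surjectivity of the intertwining map `U_{N,0}`: every smooth
`u : ℝ^{2n} → ℂ` satisfying the quasi-periodicity condition
`u(x+w) = e^{−πiN(Q(w)+σ(w,x))} u(x)` for all `w ∈ ℤ^{2n}` can be written as
`u(x) = Σ_{j∈{0,…,N−1}ⁿ} Σ_{k∈ℤⁿ} (ρ_N(x) f_j)(k + j/N)` for some Schwartz functions `f_j`,
with absolute convergence of the inner series. -/
theorem intertwiner_surjective (n N : ℕ) (hN : 1 ≤ N)
    (u : (Fin n → ℝ) × (Fin n → ℝ) → ℂ) (hu : ContDiff ℝ (⊤ : ℕ∞) u)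
    (hper : ∀ (x : (Fin n → ℝ) × (Fin n → ℝ)) (w : (Fin n → ℤ) × (Fin n → ℤ)),
      u (x + castVec n w)
        = Complex.exp (-(Real.pi * Complex.I * (N : ℂ)) *
            (((QR n (castVec n w) : ℝ) : ℂ) + ((sigmaR n (castVec n w) x : ℝ) : ℂ))) * u x) :
    ∃ f : (Fin n → Fin N) → SchwartzMap ((Fin n) → ℝ) ℂ,
      (∀ (j : Fin n → Fin N) (x : (Fin n → ℝ) × (Fin n → ℝ)),
        Summable (fun k : Fin n → ℤ =>
          ‖rho n N x 1 (⇑(f j)) (fun i => (k i : ℝ) + ((j i : ℕ) : ℝ) / N)‖)) ∧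
      ∀ x : (Fin n → ℝ) × (Fin n → ℝ),
        u x = ∑ j : Fin n → Fin N,
          ∑' k : Fin n → ℤ,
            rho n N x 1 (⇑(f j)) (fun i => (k i : ℝ) + ((j i : ℕ) : ℝ) / N) := by
  have : NeZero N := ⟨by omega⟩
  have hmode : IsPrequantumMode n N u := hper
  have hg := hmode.isQuasiperiodicFamily_gaugeTransform hu
  have hsum := hasSum_rho_residueSchwartz hg
  refine ⟨hg.residueSchwartz, fun j x ↦ (hsum x).summable.norm.prod_factor j, fun x ↦ ?_⟩
  rw [← (hsum x).tsum_eq, (hsum x).summable.tsum_prod, tsum_fintype]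
end
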